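/- arXiv:1901.09303 — 2 statements merged into one kernel-verified Lean document; each statement's English description precedes it below -/
import Mathlib

section
/- Fix μ ∈ ℝ, σ > 0, β ∈ (−1,1). There exist ε ∈ (0,1) and a Lebesgue-integrable function h : ℝ → [0,∞) such that for every α with |α − 1| < ε, α ∈ (0,2), and every t ≠ 0, one has |φ_α(t;μ,σ,α,β)| ≤ h(t), where φ_α = ∂φ/∂α (interpreted at α = 1 as the limit of the α ≠ 1 derivative, which exists). Analogous integrable dominating functions on a neighborhood of α = 1 exist for each first partial derivative φ_{θi}(t), for t·φ_{θi}(t), and for each second partial derivative φ_{θiθj}(t), θ_i, θ_j ∈ {μ,σ,α,β}. -/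
open MeasureTheory Filter

noncomputable section

def ThetaInt : Set (Fin 4 → ℝ) :=
  {θ | 0 < θ 1 ∧ θ 2 ∈ Set.Ioo (0:ℝ) 2 ∧ θ 3 ∈ Set.Ioo (-1:ℝ) 1}

/-- Cumulant (log characteristic function) of the continuous (M₀) parameterization,
with `θ = (μ, σ, α, β)`. -/
def psiM (θ : Fin 4 → ℝ) (t : ℝ) : ℂ :=
  if θ 2 = 1 then
    ((-(|θ 1 * t|) : ℝ) : ℂ)
      - Complex.I * (((2 * θ 3 / Real.pi) * (θ 1 * t) * Real.log |θ 1 * t| : ℝ) : ℂ)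
      + Complex.I * ((θ 0 * t : ℝ) : ℂ)
  else
    ((-(|θ 1 * t| ^ (θ 2)) : ℝ) : ℂ) *
        (1 + Complex.I * ((θ 3 * Real.sign t * Real.tan (Real.pi * θ 2 / 2)
            * (|θ 1 * t| ^ (1 - θ 2) - 1) : ℝ) : ℂ))
      + Complex.I * ((θ 0 * t : ℝ) : ℂ)

/-- Characteristic function of the (M₀) parameterization. -/
def phiM (θ : Fin 4 → ℝ) (t : ℝ) : ℂ := Complex.exp (psiM θ t)

/-- Stable density in the (M₀) parameterization, via Fourier inversion. -/
def fM (θ : Fin 4 → ℝ) (x : ℝ) : ℝ :=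
  (1 / (2 * Real.pi)) *
    (∫ t : ℝ, Complex.exp (-Complex.I * (t : ℂ) * (x : ℂ)) * phiM θ t).re

/-- Partial derivative of the density in parameter `i`. -/
def fP (i : Fin 4) (θ : Fin 4 → ℝ) (x : ℝ) : ℝ :=
  deriv (fun s => fM (Function.update θ i s) x) (θ i)

/-- Second partial derivative of the density in parameters `i`, `j`. -/
def fPP (i j : Fin 4) (θ : Fin 4 → ℝ) (x : ℝ) : ℝ :=
  deriv (fun s => fP i (Function.update θ j s) x) (θ j)

/-- Derivative of the density in `x`. -/
def fX (θ : Fin 4 → ℝ) (x : ℝ) : ℝ := deriv (fun y => fM θ y) x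

/-- Mixed derivative `∂²f/∂x∂θᵢ`. -/
def fPX (i : Fin 4) (θ : Fin 4 → ℝ) (x : ℝ) : ℝ := deriv (fun y => fP i θ y) x

/-- Score functions. -/
def ellP (i : Fin 4) (θ : Fin 4 → ℝ) (x : ℝ) : ℝ := fP i θ x / fM θ x

/-- Derivative of the score in `x`. -/
def ellPX (i : Fin 4) (θ : Fin 4 → ℝ) (x : ℝ) : ℝ := deriv (fun y => ellP i θ y) x

/-- Derivative of the score `ℓ_{θᵢ}` in the parameter `θⱼ`. -/
def ellPP (i j : Fin 4) (θ : Fin 4 → ℝ) (x : ℝ) : ℝ :=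
  deriv (fun s => ellP i (Function.update θ j s) x) (θ j)

/-- `h = O(r)` as `|x| → ∞`. -/
def IsBigOAtInfty (h r : ℝ → ℝ) : Prop :=
  ∃ c > 0, ∃ M > 0, ∀ x : ℝ, M ≤ |x| → |h x| ≤ c * r x


/-- Partial derivative of the characteristic function `φ` in the parameter `θᵢ`
(at `α = 1` this is the limit of the `α ≠ 1` derivative). -/
def phiP (i : Fin 4) (θ : Fin 4 → ℝ) (t : ℝ) : ℂ :=
  deriv (fun s => phiM (Function.update θ i s) t) (θ i)

/-- Second partial derivative of the characteristic function `φ` in parameters `θᵢ, θⱼ`. -/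
def phiPP (i j : Fin 4) (θ : Fin 4 → ℝ) (t : ℝ) : ℂ :=
  deriv (fun s => phiP i (Function.update θ j s) t) (θ j)

end


lemma smooth_dslope (f : ℝ → ℝ) (hf : ∀ x, AnalyticAt ℝ f x) (x : ℝ) : AnalyticAt ℝ (dslope f 0) x := by
  by_cases hx : x = 0
  · subst hx
    obtain ⟨p, hp⟩ := hf 0
    exact ⟨_, hp.has_fpower_series_dslope_fslope⟩
  · have : AnalyticAt ℝ (fun y => (f y - f 0) / (y - 0)) x := by
      refine AnalyticAt.div ((hf x).sub analyticAt_const) (analyticAt_id.sub analyticAt_const) (by simpa using hx)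
    refine this.congr ?_
    filter_upwards [isOpen_ne.mem_nhds hx] with y hy
    rw [dslope_of_ne _ hy, slope_def_field]

noncomputable def gg : ℝ → ℝ := dslope Real.exp 0

lemma gg_an (x : ℝ) : AnalyticAt ℝ gg x := smooth_dslope _ (fun _ => analyticAt_rexp) x

lemma gg_mul (x : ℝ) : x * gg x = Real.exp x - 1 := by
  have := sub_smul_dslope Real.exp 0 x
  simpa [gg] using this

lemma gg_d0 (x : ℝ) : HasDerivAt gg (deriv gg x) x := (gg_an x).differentiableAt.hasDerivAt
lemma gg_d1 (x : ℝ) : HasDerivAt (deriv gg) (deriv (deriv gg) x) x := (gg_an x).deriv.differentiableAt.hasDerivAt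

lemma gg_mul1 (x : ℝ) : gg x + x * deriv gg x = Real.exp x := by
  have h1 := (hasDerivAt_id x).mul (gg_d0 x)
  have h2 := (Real.hasDerivAt_exp x).sub_const 1
  have : (id * gg : ℝ → ℝ) = fun x => Real.exp x - 1 := by ext y; simpa using gg_mul y
  rw [this] at h1
  simpa using h1.unique h2

lemma gg_mul2 (x : ℝ) : 2 * deriv gg x + x * deriv (deriv gg) x = Real.exp x := by
  have h1 := (gg_d0 x).add ((hasDerivAt_id x).mul (gg_d1 x))
  have h2 := (Real.hasDerivAt_exp x)
  have : (gg + id * deriv gg : ℝ → ℝ) = fun x => Real.exp x := by ext y; simpa using gg_mul1 y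
  rw [this] at h1
  have := h1.unique h2
  simp at this
  linarith

lemma gg_bd : ∃ C : ℝ, 0 < C ∧ ∀ x, |gg x| ≤ C * Real.exp |x| ∧ |deriv gg x| ≤ C * Real.exp |x| ∧
    |deriv (deriv gg) x| ≤ C * Real.exp |x| := by
  have c0 : ContinuousOn gg (Set.Icc (-1) 1) := fun x _ => (gg_an x).continuousAt.continuousWithinAt
  have c1 : ContinuousOn (deriv gg) (Set.Icc (-1) 1) := fun x _ => (gg_an x).deriv.continuousAt.continuousWithinAt
  have c2 : ContinuousOn (deriv (deriv gg)) (Set.Icc (-1) 1) := fun x _ => (gg_an x).deriv.deriv.continuousAt.continuousWithinAt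
  obtain ⟨C0, h0⟩ := isCompact_Icc.exists_bound_of_continuousOn c0
  obtain ⟨C1, h1⟩ := isCompact_Icc.exists_bound_of_continuousOn c1
  obtain ⟨C2, h2⟩ := isCompact_Icc.exists_bound_of_continuousOn c2
  refine ⟨|C0| + |C1| + |C2| + 7, by positivity, fun x => ?_⟩
  have he : 1 ≤ Real.exp |x| := Real.one_le_exp (abs_nonneg x)
  have a0 := abs_nonneg C0
  have a1 := abs_nonneg C1
  have a2 := abs_nonneg C2
  have b0 := le_abs_self C0
  have b1 := le_abs_self C1
  have b2 := le_abs_self C2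
  by_cases hx : |x| ≤ 1
  · have hm : x ∈ Set.Icc (-1:ℝ) 1 := abs_le.1 hx
    have h0 := h0 x hm
    have h1 := h1 x hm
    have h2 := h2 x hm
    rw [Real.norm_eq_abs] at h0 h1 h2
    refine ⟨?_, ?_, ?_⟩ <;> nlinarith
  · push Not at hx
    have key : ∀ y z : ℝ, x * y = z → |y| ≤ |z| := by
      rintro y z rfl
      rw [abs_mul]
      nlinarith [abs_nonneg y]
    have hee : |Real.exp x| ≤ Real.exp |x| := by
      rw [abs_of_pos (Real.exp_pos x)]; exact Real.exp_le_exp.2 (le_abs_self x)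
    have k0 : |gg x| ≤ 2 * Real.exp |x| := by
      refine (key _ _ (gg_mul x)).trans ((abs_sub _ _).trans ?_)
      simp only [abs_one]; linarith
    have k1 : |deriv gg x| ≤ 3 * Real.exp |x| := by
      refine (key _ (Real.exp x - gg x) (by linarith [gg_mul1 x])).trans ((abs_sub _ _).trans ?_)
      linarith
    have k2 : |deriv (deriv gg) x| ≤ 7 * Real.exp |x| := by
      refine (key _ (Real.exp x - 2 * deriv gg x) (by linarith [gg_mul2 x])).trans ((abs_sub _ _).trans ?_)
      rw [abs_mul, abs_two]; linarith
    refine ⟨?_, ?_, ?_⟩ <;> nlinarith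

noncomputable def TT (d : ℝ) : ℝ := (2 / Real.pi) * Real.cos (Real.pi / 2 * d) / dslope Real.sin 0 (Real.pi / 2 * d)

lemma sinc_ne (d : ℝ) (hd : |d| < 1) : dslope Real.sin 0 (Real.pi / 2 * d) ≠ 0 := by
  by_cases h : d = 0
  · simp [h]
  · have hp := Real.pi_pos
    have h1 : Real.pi / 2 * d ≠ 0 := by positivity
    have := sub_smul_dslope Real.sin 0 (Real.pi / 2 * d)
    simp only [sub_zero, Real.sin_zero, smul_eq_mul] at this
    intro h0
    rw [h0, mul_zero] at this
    have h3 := abs_lt.1 hd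
    exact h1 ((Real.sin_eq_zero_iff_of_lt_of_lt (by nlinarith) (by nlinarith)).1 this.symm)

lemma TT_an (d : ℝ) (hd : |d| < 1) : AnalyticAt ℝ TT d := by
  have h1 : AnalyticAt ℝ (fun d : ℝ => Real.pi / 2 * d) d := by fun_prop
  have h2 : AnalyticAt ℝ (fun d : ℝ => dslope Real.sin 0 (Real.pi / 2 * d)) d :=
    (smooth_dslope Real.sin (fun _ => Real.analyticAt_sin) _).fun_comp h1
  refine AnalyticAt.div ?_ h2 (sinc_ne d hd)
  exact analyticAt_const.mul (Real.analyticAt_cos.fun_comp h1)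

lemma TT_bd : ∃ C : ℝ, 0 < C ∧ ∀ d, |d| < 1/2 → |TT d| ≤ C ∧ |deriv TT d| ≤ C ∧ |deriv (deriv TT) d| ≤ C := by
  have hh : ∀ x ∈ Set.Icc (-(1/2):ℝ) (1/2), AnalyticAt ℝ TT x := fun x hx => TT_an x (by
    have := abs_le.2 hx; linarith)
  have c0 : ContinuousOn TT (Set.Icc (-(1/2)) (1/2)) := fun x h => (hh x h).continuousAt.continuousWithinAt
  have c1 : ContinuousOn (deriv TT) (Set.Icc (-(1/2)) (1/2)) := fun x h => (hh x h).deriv.continuousAt.continuousWithinAt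
  have c2 : ContinuousOn (deriv (deriv TT)) (Set.Icc (-(1/2)) (1/2)) := fun x h => (hh x h).deriv.deriv.continuousAt.continuousWithinAt
  obtain ⟨C0, h0⟩ := isCompact_Icc.exists_bound_of_continuousOn c0
  obtain ⟨C1, h1⟩ := isCompact_Icc.exists_bound_of_continuousOn c1
  obtain ⟨C2, h2⟩ := isCompact_Icc.exists_bound_of_continuousOn c2
  refine ⟨|C0| + |C1| + |C2| + 7, by positivity, fun x hx => ?_⟩
  have a0 := abs_nonneg C0
  have a1 := abs_nonneg C1
  have a2 := abs_nonneg C2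
  have b0 := le_abs_self C0
  have b1 := le_abs_self C1
  have b2 := le_abs_self C2
  have hm : x ∈ Set.Icc (-(1/2):ℝ) (1/2) := abs_le.1 hx.le
  have h0 := h0 x hm
  have h1 := h1 x hm
  have h2 := h2 x hm
  rw [Real.norm_eq_abs] at h0 h1 h2
  refine ⟨?_, ?_, ?_⟩ <;> linarith

lemma TT_zero : TT 0 = 2 / Real.pi := by simp [TT]

lemma TT_ne (d : ℝ) (hd : |d| < 1) (h : d ≠ 0) : TT d = - d * Real.tan (Real.pi * (1 + d) / 2) := by
  have hp := Real.pi_pos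
  have h1 : Real.pi / 2 * d ≠ 0 := by positivity
  have hs := sinc_ne d hd
  have := sub_smul_dslope Real.sin 0 (Real.pi / 2 * d)
  simp only [sub_zero, Real.sin_zero, smul_eq_mul] at this
  rw [show Real.pi * (1 + d) / 2 = Real.pi / 2 * d + Real.pi / 2 by ring, Real.tan_eq_sin_div_cos,
    Real.sin_add_pi_div_two, Real.cos_add_pi_div_two, ← this, TT]
  field_simp

lemma gg_zero : gg 0 = 1 := by simp [gg]

noncomputable def LL (t s : ℝ) : ℝ := Real.log (s * |t|)
noncomputable def X0 (t s a : ℝ) : ℝ := Real.exp (LL t s) * (LL t s * gg ((a - 1) * LL t s))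
noncomputable def X1 (t s a : ℝ) : ℝ := Real.exp (LL t s) * (LL t s ^ 2 * deriv gg ((a - 1) * LL t s))
noncomputable def X2 (t s a : ℝ) : ℝ := Real.exp (LL t s) * (LL t s ^ 3 * deriv (deriv gg) ((a - 1) * LL t s))
noncomputable def YY (k : ℕ) (t s a : ℝ) : ℝ := LL t s ^ k * Real.exp (a * LL t s)

lemma LL_d {t s : ℝ} (ht : t ≠ 0) (hs : 0 < s) : HasDerivAt (LL t) (1 / s) s := by
  have h0 : 0 < |t| := abs_pos.2 ht
  have := ((hasDerivAt_id s).mul_const |t|).log (by simp; exact ⟨hs.ne', ht⟩)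
  refine this.congr_deriv ?_
  simp only [id]; field_simp

lemma X0_da (t s a : ℝ) : HasDerivAt (fun a => X0 t s a) (X1 t s a) a := by
  have h1 : HasDerivAt (fun a : ℝ => (a - 1) * LL t s) (LL t s) a := by
    simpa using ((hasDerivAt_id a).sub_const 1).mul_const (LL t s)
  have h2 := (gg_d0 ((a - 1) * LL t s)).comp a h1
  have h3 := (h2.const_mul (LL t s)).const_mul (Real.exp (LL t s))
  refine h3.congr_deriv ?_
  simp only [X1]; ring

lemma X1_da (t s a : ℝ) : HasDerivAt (fun a => X1 t s a) (X2 t s a) a := by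
  have h1 : HasDerivAt (fun a : ℝ => (a - 1) * LL t s) (LL t s) a := by
    simpa using ((hasDerivAt_id a).sub_const 1).mul_const (LL t s)
  have h2 := (gg_d1 ((a - 1) * LL t s)).comp a h1
  have h3 := (h2.const_mul (LL t s ^ 2)).const_mul (Real.exp (LL t s))
  refine h3.congr_deriv ?_
  simp only [X2]; ring

lemma YY_da (k : ℕ) (t s a : ℝ) : HasDerivAt (fun a => YY k t s a) (YY (k+1) t s a) a := by
  have h1 : HasDerivAt (fun a : ℝ => a * LL t s) (LL t s) a := by
    simpa using (hasDerivAt_id a).mul_const (LL t s)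
  refine (h1.exp.const_mul (LL t s ^ k)).congr_deriv ?_
  simp only [YY]; ring

lemma X0_ds {t s : ℝ} (ht : t ≠ 0) (hs : 0 < s) (a : ℝ) :
    HasDerivAt (fun s => X0 t s a) ((X0 t s a + YY 0 t s a) / s) s := by
  have hL := LL_d ht hs
  have h2 := (gg_d0 ((a - 1) * LL t s)).comp s (hL.const_mul (a - 1))
  refine (hL.exp.fun_mul (hL.fun_mul h2)).congr_deriv ?_
  have := gg_mul1 ((a - 1) * LL t s)
  have e : Real.exp (a * LL t s) = Real.exp (LL t s) * Real.exp ((a - 1) * LL t s) := by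
    rw [← Real.exp_add]; ring_nf
  simp only [X0, YY, e, ← this, Function.comp]; field_simp; try ring

lemma X1_ds {t s : ℝ} (ht : t ≠ 0) (hs : 0 < s) (a : ℝ) :
    HasDerivAt (fun s => X1 t s a) ((X1 t s a + YY 1 t s a) / s) s := by
  have hL := LL_d ht hs
  have h2 := (gg_d1 ((a - 1) * LL t s)).comp s (hL.const_mul (a - 1))
  refine (hL.exp.fun_mul ((hL.fun_pow 2).fun_mul h2)).congr_deriv ?_
  have := gg_mul2 ((a - 1) * LL t s)
  have e : Real.exp (a * LL t s) = Real.exp (LL t s) * Real.exp ((a - 1) * LL t s) := by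
    rw [← Real.exp_add]; ring_nf
  simp only [X1, YY, e, ← this, Function.comp]; field_simp; ring

lemma Y0_ds {t s : ℝ} (ht : t ≠ 0) (hs : 0 < s) (a : ℝ) :
    HasDerivAt (fun s => YY 0 t s a) (a * YY 0 t s a / s) s := by
  have hL := LL_d ht hs
  refine ((hL.pow 0).mul (hL.const_mul a).exp).congr_deriv ?_
  simp only [YY]; simp; field_simp

lemma Y1_ds {t s : ℝ} (ht : t ≠ 0) (hs : 0 < s) (a : ℝ) :
    HasDerivAt (fun s => YY 1 t s a) ((YY 0 t s a + a * YY 1 t s a) / s) s := by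
  have hL := LL_d ht hs
  refine ((hL.pow 1).mul (hL.const_mul a).exp).congr_deriv ?_
  simp only [YY]; simp; field_simp

lemma TT_d0 {a : ℝ} (ha : |a - 1| < 1/2) : HasDerivAt (fun a => TT (a - 1)) (deriv TT (a - 1)) a := by
  have h := (TT_an (a-1) (by linarith)).differentiableAt.hasDerivAt
  have h2 := h.comp a ((hasDerivAt_id a).sub_const 1)
  rw [mul_one] at h2
  exact h2

lemma TT_d1 {a : ℝ} (ha : |a - 1| < 1/2) :
    HasDerivAt (fun a => deriv TT (a - 1)) (deriv (deriv TT) (a - 1)) a := by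
  have h := (TT_an (a-1) (by linarith)).deriv.differentiableAt.hasDerivAt
  have h2 := h.comp a ((hasDerivAt_id a).sub_const 1)
  rw [mul_one] at h2
  exact h2

/-- real part and imaginary part of the exponent, with partial derivatives -/
noncomputable def AA (θ : Fin 4 → ℝ) (t : ℝ) : ℝ := - YY 0 t (θ 1) (θ 2)
noncomputable def BB (θ : Fin 4 → ℝ) (t : ℝ) : ℝ :=
  θ 0 * t - θ 3 * (Real.sign t * (TT (θ 2 - 1) * X0 t (θ 1) (θ 2)))

noncomputable def A1 (i : Fin 4) (θ : Fin 4 → ℝ) (t : ℝ) : ℝ :=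
  ![0, - (θ 2 * YY 0 t (θ 1) (θ 2) / θ 1), - YY 1 t (θ 1) (θ 2), 0] i

noncomputable def B1 (i : Fin 4) (θ : Fin 4 → ℝ) (t : ℝ) : ℝ :=
  ![t, - (θ 3 * (Real.sign t * (TT (θ 2 - 1) * ((X0 t (θ 1) (θ 2) + YY 0 t (θ 1) (θ 2)) / θ 1)))),
    - (θ 3 * (Real.sign t * (deriv TT (θ 2 - 1) * X0 t (θ 1) (θ 2) + TT (θ 2 - 1) * X1 t (θ 1) (θ 2)))),
    - (Real.sign t * (TT (θ 2 - 1) * X0 t (θ 1) (θ 2)))] i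

def UU : Set (Fin 4 → ℝ) := {θ | 0 < θ 1 ∧ |θ 2 - 1| < 1/2}

lemma UU_open : IsOpen UU := by
  apply IsOpen.inter
  · exact isOpen_lt continuous_const (continuous_apply 1)
  · exact isOpen_lt (f := fun θ : Fin 4 → ℝ => |θ 2 - 1|) (by fun_prop) continuous_const

lemma UU_ev {θ : Fin 4 → ℝ} (h : θ ∈ UU) (i : Fin 4) :
    ∀ᶠ s in nhds (θ i), Function.update θ i s ∈ UU := by
  have hc : Continuous (fun s => Function.update θ i s) := continuous_const.update i continuous_id
  apply hc.continuousAt.eventually_mem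
  rw [Function.update_eq_self]
  exact UU_open.mem_nhds h

lemma phi_eq {θ : Fin 4 → ℝ} (h : θ ∈ UU) {t : ℝ} (ht : t ≠ 0) :
    phiM θ t = Complex.exp ((AA θ t : ℂ) + Complex.I * (BB θ t : ℂ)) := by
  obtain ⟨hs, ha⟩ := h
  have h0 : 0 < |t| := abs_pos.2 ht
  have hu : 0 < θ 1 * |t| := by positivity
  have habs : |θ 1 * t| = θ 1 * |t| := by rw [abs_mul, abs_of_pos hs]
  have hst : Real.sign t * |t| = t := by
    rcases lt_or_gt_of_ne ht with h | h
    · rw [Real.sign_of_neg h, abs_of_neg h]; ring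
    · rw [Real.sign_of_pos h, abs_of_pos h]; ring
  have hexp : ∀ a, Real.exp (a * LL t (θ 1)) = (θ 1 * |t|) ^ a := fun a => by
    rw [Real.rpow_def_of_pos hu, mul_comm]; rfl
  have hexp1 : Real.exp (LL t (θ 1)) = θ 1 * |t| := Real.exp_log hu
  rw [phiM]
  congr 1
  rw [psiM, habs]
  split_ifs with h1
  · have hA : AA θ t = -(θ 1 * |t|) := by
      simp [AA, YY, h1, hexp1]
    have hB : BB θ t = θ 0 * t - (2 * θ 3 / Real.pi) * (θ 1 * t) * Real.log (θ 1 * |t|) := by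
      rw [BB, h1, X0, sub_self, zero_mul, TT_zero, gg_zero, hexp1]
      simp only [LL]
      linear_combination (-(2 * θ 3 / Real.pi * θ 1 * Real.log (θ 1 * |t|))) * hst
    rw [hA, hB]; push_cast; ring
  · have hA : AA θ t = -(θ 1 * |t|) ^ (θ 2) := by
      simp [AA, YY, hexp]
    have hd : θ 2 - 1 ≠ 0 := sub_ne_zero.2 h1
    have hX : (θ 2 - 1) * X0 t (θ 1) (θ 2) = (θ 1 * |t|) ^ (θ 2) - θ 1 * |t| := by
      have e : (θ 1 * |t|) ^ (θ 2) = Real.exp (LL t (θ 1)) * Real.exp ((θ 2 - 1) * LL t (θ 1)) := by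
        rw [← hexp, ← Real.exp_add]; ring_nf
      have := gg_mul ((θ 2 - 1) * LL t (θ 1))
      rw [e, ← hexp1, X0]
      linear_combination (Real.exp (LL t (θ 1))) * this
    have hp : (θ 1 * |t|) ^ (θ 2) * (θ 1 * |t|) ^ (1 - θ 2) = θ 1 * |t| := by
      rw [← Real.rpow_add hu]; simp
    have hB : BB θ t = θ 0 * t - (θ 1 * |t|) ^ (θ 2) * (θ 3 * Real.sign t * Real.tan (Real.pi * θ 2 / 2)
            * ((θ 1 * |t|) ^ (1 - θ 2) - 1)) := by
      rw [BB, TT_ne _ (by linarith) hd, show 1 + (θ 2 - 1) = θ 2 by ring]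
      linear_combination (θ 3 * Real.sign t * Real.tan (Real.pi * θ 2 / 2)) * (hX + hp)
    rw [hA, hB]; push_cast; ring

lemma AA_d {θ : Fin 4 → ℝ} (h : θ ∈ UU) {t : ℝ} (ht : t ≠ 0) (i : Fin 4) :
    HasDerivAt (fun s => AA (Function.update θ i s) t) (A1 i θ t) (θ i) := by
  obtain ⟨hs, ha⟩ := h
  fin_cases i
  · simpa [AA, A1] using hasDerivAt_const _ _
  · simpa [AA, A1] using (Y0_ds ht hs (θ 2)).fun_neg
  · simpa [AA, A1] using (YY_da 0 t (θ 1) (θ 2)).fun_neg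
  · simpa [AA, A1] using hasDerivAt_const _ _

lemma BB_d {θ : Fin 4 → ℝ} (h : θ ∈ UU) {t : ℝ} (ht : t ≠ 0) (i : Fin 4) :
    HasDerivAt (fun s => BB (Function.update θ i s) t) (B1 i θ t) (θ i) := by
  obtain ⟨hs, ha⟩ := h
  fin_cases i
  · simpa [BB, B1] using ((hasDerivAt_id (θ 0)).mul_const t).sub_const (θ 3 * (Real.sign t * (TT (θ 2 - 1) * X0 t (θ 1) (θ 2))))
  · simpa [BB, B1] using ((((X0_ds ht hs (θ 2)).const_mul (TT (θ 2 - 1))).const_mul (Real.sign t)).const_mul (θ 3)).const_sub (θ 0 * t)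
  · simpa [BB, B1] using ((((TT_d0 ha).mul (X0_da t (θ 1) (θ 2))).const_mul (Real.sign t)).const_mul (θ 3)).const_sub (θ 0 * t)
  · simpa [BB, B1] using ((hasDerivAt_id (θ 3)).mul_const (Real.sign t * (TT (θ 2 - 1) * X0 t (θ 1) (θ 2)))).const_sub (θ 0 * t)

noncomputable def A2 (i j : Fin 4) (θ : Fin 4 → ℝ) (t : ℝ) : ℝ :=
  ![![0, 0, 0, 0],
    ![0, -((θ 2 * (θ 2 * YY 0 t (θ 1) (θ 2) / θ 1) * θ 1 - θ 2 * YY 0 t (θ 1) (θ 2)) / θ 1 ^ 2),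
      -((YY 0 t (θ 1) (θ 2) + θ 2 * YY 1 t (θ 1) (θ 2)) / θ 1), 0],
    ![0, -((YY 0 t (θ 1) (θ 2) + θ 2 * YY 1 t (θ 1) (θ 2)) / θ 1), - YY 2 t (θ 1) (θ 2), 0],
    ![0, 0, 0, 0]] i j

noncomputable def B2 (i j : Fin 4) (θ : Fin 4 → ℝ) (t : ℝ) : ℝ :=
  ![![0, 0, 0, 0],
    ![0, -(θ 3 * (Real.sign t * (TT (θ 2 - 1) *
        ((((X0 t (θ 1) (θ 2) + YY 0 t (θ 1) (θ 2)) / θ 1 + θ 2 * YY 0 t (θ 1) (θ 2) / θ 1) * θ 1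
          - (X0 t (θ 1) (θ 2) + YY 0 t (θ 1) (θ 2))) / θ 1 ^ 2)))),
      -(θ 3 * (Real.sign t * (deriv TT (θ 2 - 1) * ((X0 t (θ 1) (θ 2) + YY 0 t (θ 1) (θ 2)) / θ 1) +
        TT (θ 2 - 1) * ((X1 t (θ 1) (θ 2) + YY 1 t (θ 1) (θ 2)) / θ 1)))),
      -(Real.sign t * (TT (θ 2 - 1) * ((X0 t (θ 1) (θ 2) + YY 0 t (θ 1) (θ 2)) / θ 1)))],
    ![0, -(θ 3 * (Real.sign t * (deriv TT (θ 2 - 1) * ((X0 t (θ 1) (θ 2) + YY 0 t (θ 1) (θ 2)) / θ 1) +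
        TT (θ 2 - 1) * ((X1 t (θ 1) (θ 2) + YY 1 t (θ 1) (θ 2)) / θ 1)))),
      -(θ 3 * (Real.sign t * ((deriv (deriv TT) (θ 2 - 1) * X0 t (θ 1) (θ 2) + deriv TT (θ 2 - 1) * X1 t (θ 1) (θ 2)) +
        (deriv TT (θ 2 - 1) * X1 t (θ 1) (θ 2) + TT (θ 2 - 1) * X2 t (θ 1) (θ 2))))),
      -(Real.sign t * (deriv TT (θ 2 - 1) * X0 t (θ 1) (θ 2) + TT (θ 2 - 1) * X1 t (θ 1) (θ 2)))],
    ![0, -(Real.sign t * (TT (θ 2 - 1) * ((X0 t (θ 1) (θ 2) + YY 0 t (θ 1) (θ 2)) / θ 1))),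
      -(Real.sign t * (deriv TT (θ 2 - 1) * X0 t (θ 1) (θ 2) + TT (θ 2 - 1) * X1 t (θ 1) (θ 2))), 0]] i j

lemma A1_d {θ : Fin 4 → ℝ} (h : θ ∈ UU) {t : ℝ} (ht : t ≠ 0) (i j : Fin 4) :
    HasDerivAt (fun s => A1 i (Function.update θ j s) t) (A2 i j θ t) (θ j) := by
  obtain ⟨hs, ha⟩ := h
  have dY0s := Y0_ds ht hs (θ 2)
  have dY1s := Y1_ds ht hs (θ 2)
  have dY0a := YY_da 0 t (θ 1) (θ 2)
  have dY1a := YY_da 1 t (θ 1) (θ 2)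
  fin_cases i <;> fin_cases j <;> simp [A1, A2] <;> try exact hasDerivAt_const _ _
  · exact (((dY0s.const_mul (θ 2)).fun_div (hasDerivAt_id (θ 1)) hs.ne').fun_neg).congr_deriv (by simp)
  · exact ((((hasDerivAt_id (θ 2)).fun_mul dY0a).div_const (θ 1)).fun_neg).congr_deriv (by simp)
  · exact dY1s.fun_neg.congr_deriv (by ring)
  · exact dY1a.fun_neg

lemma B1_d {θ : Fin 4 → ℝ} (h : θ ∈ UU) {t : ℝ} (ht : t ≠ 0) (i j : Fin 4) :
    HasDerivAt (fun s => B1 i (Function.update θ j s) t) (B2 i j θ t) (θ j) := by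
  obtain ⟨hs, ha⟩ := h
  have dY0s := Y0_ds ht hs (θ 2)
  have dX0s := X0_ds ht hs (θ 2)
  have dX1s := X1_ds ht hs (θ 2)
  have dY0a := YY_da 0 t (θ 1) (θ 2)
  have dX0a := X0_da t (θ 1) (θ 2)
  have dX1a := X1_da t (θ 1) (θ 2)
  have dT := TT_d0 ha
  have dT1 := TT_d1 ha
  fin_cases i <;> fin_cases j <;> simp [B1, B2] <;> try exact hasDerivAt_const _ _
  · exact ((((((dX0s.fun_add dY0s).fun_div (hasDerivAt_id (θ 1)) hs.ne').const_mul (TT (θ 2 - 1))).const_mul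
      (Real.sign t)).const_mul (θ 3)).fun_neg).congr_deriv (by simp)
  · exact ((((dT.fun_mul ((dX0a.fun_add dY0a).div_const (θ 1))).const_mul
      (Real.sign t)).const_mul (θ 3)).fun_neg).congr_deriv (by simp)
  · exact ((hasDerivAt_id (θ 3)).mul_const _).fun_neg.congr_deriv (by simp)
  · exact (((((dX0s.const_mul _).fun_add (dX1s.const_mul _)).const_mul
      (Real.sign t)).const_mul (θ 3)).fun_neg).congr_deriv (by simp)
  · exact (((((dT1.fun_mul dX0a).fun_add (dT.fun_mul dX1a)).const_mul
      (Real.sign t)).const_mul (θ 3)).fun_neg).congr_deriv (by simp)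
  · exact ((hasDerivAt_id (θ 3)).mul_const _).fun_neg.congr_deriv (by simp)
  · exact ((dX0s.const_mul _).const_mul (Real.sign t)).fun_neg
  · exact ((dT.fun_mul dX0a).const_mul (Real.sign t)).fun_neg

lemma phiP_eq {θ : Fin 4 → ℝ} (h : θ ∈ UU) {t : ℝ} (ht : t ≠ 0) (i : Fin 4) :
    phiP i θ t = Complex.exp ((AA θ t : ℂ) + Complex.I * (BB θ t : ℂ)) *
      ((A1 i θ t : ℂ) + Complex.I * (B1 i θ t : ℂ)) := by
  have he : (fun s => phiM (Function.update θ i s) t) =ᶠ[nhds (θ i)]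
      fun s => Complex.exp ((AA (Function.update θ i s) t : ℂ) + Complex.I * (BB (Function.update θ i s) t : ℂ)) := by
    filter_upwards [UU_ev h i] with s hs
    exact phi_eq hs ht
  rw [phiP, he.deriv_eq]
  have := ((AA_d h ht i).ofReal_comp.fun_add ((BB_d h ht i).ofReal_comp.const_mul Complex.I)).cexp
  rw [this.deriv, Function.update_eq_self]

lemma phiPP_eq {θ : Fin 4 → ℝ} (h : θ ∈ UU) {t : ℝ} (ht : t ≠ 0) (i j : Fin 4) :
    phiPP i j θ t = Complex.exp ((AA θ t : ℂ) + Complex.I * (BB θ t : ℂ)) *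
      ((A1 j θ t : ℂ) + Complex.I * (B1 j θ t : ℂ)) * ((A1 i θ t : ℂ) + Complex.I * (B1 i θ t : ℂ)) +
      Complex.exp ((AA θ t : ℂ) + Complex.I * (BB θ t : ℂ)) *
      ((A2 i j θ t : ℂ) + Complex.I * (B2 i j θ t : ℂ)) := by
  have he : (fun s => phiP i (Function.update θ j s) t) =ᶠ[nhds (θ j)]
      fun s => Complex.exp ((AA (Function.update θ j s) t : ℂ) + Complex.I * (BB (Function.update θ j s) t : ℂ)) *
        ((A1 i (Function.update θ j s) t : ℂ) + Complex.I * (B1 i (Function.update θ j s) t : ℂ)) := by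
    filter_upwards [UU_ev h j] with s hs
    exact phiP_eq hs ht i
  rw [phiPP, he.deriv_eq]
  have := ((AA_d h ht j).ofReal_comp.fun_add ((BB_d h ht j).ofReal_comp.const_mul Complex.I)).cexp
  have h2 := (A1_d h ht i j).ofReal_comp.fun_add ((B1_d h ht i j).ofReal_comp.const_mul Complex.I)
  rw [(this.fun_mul h2).deriv, Function.update_eq_self]

def PB (F : ℝ → ℝ → ℝ) : Prop :=
  ∃ C : ℝ, 0 ≤ C ∧ ∀ a t : ℝ, |a - 1| < 1/2 → t ≠ 0 → |F a t| ≤ C * (1 + t ^ 2)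
def BD (F : ℝ → ℝ → ℝ) : Prop :=
  ∃ C : ℝ, 0 ≤ C ∧ ∀ a t : ℝ, |a - 1| < 1/2 → t ≠ 0 → |F a t| ≤ C

lemma PB.add {F G : ℝ → ℝ → ℝ} (hF : PB F) (hG : PB G) : PB (fun a t => F a t + G a t) := by
  obtain ⟨C, hC, h⟩ := hF
  obtain ⟨D, hD, k⟩ := hG
  refine ⟨C + D, by positivity, fun a t ha ht => (abs_add_le _ _).trans ?_⟩
  linarith [h a t ha ht, k a t ha ht]
lemma PB.neg {F : ℝ → ℝ → ℝ} (hF : PB F) : PB (fun a t => - F a t) := by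
  obtain ⟨C, hC, h⟩ := hF
  exact ⟨C, hC, fun a t ha ht => by rw [abs_neg]; exact h a t ha ht⟩
lemma PB.sub {F G : ℝ → ℝ → ℝ} (hF : PB F) (hG : PB G) : PB (fun a t => F a t - G a t) := by
  simpa only [sub_eq_add_neg] using hF.add hG.neg
lemma PB.bmul {F G : ℝ → ℝ → ℝ} (hG : BD G) (hF : PB F) : PB (fun a t => G a t * F a t) := by
  obtain ⟨C, hC, h⟩ := hF
  obtain ⟨D, hD, k⟩ := hG
  refine ⟨D * C, by positivity, fun a t ha ht => ?_⟩
  rw [abs_mul, mul_assoc]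
  exact mul_le_mul (k a t ha ht) (h a t ha ht) (abs_nonneg _) hD
lemma BD.const (c : ℝ) : BD (fun _ _ => c) := ⟨|c|, abs_nonneg _, fun _ _ _ _ => le_rfl⟩
lemma PB.mul_const {F : ℝ → ℝ → ℝ} (hF : PB F) (c : ℝ) : PB (fun a t => F a t * c) := by
  simpa only [mul_comm] using PB.bmul (BD.const c) hF
lemma PB.div_const {F : ℝ → ℝ → ℝ} (hF : PB F) (c : ℝ) : PB (fun a t => F a t / c) := by
  simpa only [div_eq_mul_inv] using hF.mul_const c⁻¹
lemma PB.zero : PB (fun _ _ => 0) := ⟨0, le_rfl, fun a t _ _ => by simp⟩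
lemma PB.t : PB (fun _ t => t) := ⟨1, zero_le_one, fun a t _ _ => by
  rw [← sq_abs]; nlinarith [sq_nonneg (|t| - 1)]⟩
lemma BD.a : BD (fun a _ => a) := ⟨2, zero_le_two, fun a t h _ => by
  rw [abs_lt] at h; rw [abs_le]; constructor <;> linarith⟩
lemma BD.sign : BD (fun _ t => Real.sign t) := ⟨1, zero_le_one, fun a t _ ht => by
  change |Real.sign t| ≤ 1
  rcases lt_or_gt_of_ne ht with h | h
  · rw [Real.sign_of_neg h]; simp
  · rw [Real.sign_of_pos h]; simp⟩
lemma BD.T0 : BD (fun a _ => TT (a - 1)) := by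
  obtain ⟨C, hC, h⟩ := TT_bd
  exact ⟨C, hC.le, fun a t ha _ => (h _ ha).1⟩
lemma BD.T1 : BD (fun a _ => deriv TT (a - 1)) := by
  obtain ⟨C, hC, h⟩ := TT_bd
  exact ⟨C, hC.le, fun a t ha _ => (h _ ha).2.1⟩
lemma BD.T2 : BD (fun a _ => deriv (deriv TT) (a - 1)) := by
  obtain ⟨C, hC, h⟩ := TT_bd
  exact ⟨C, hC.le, fun a t ha _ => (h _ ha).2.2⟩

lemma atom_bd {σ : ℝ} (hσ : 0 < σ) {t : ℝ} (ht : t ≠ 0) {d : ℝ} (hd : |d| < 1/2) (k : ℕ) (hk : k ≤ 3) :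
    Real.exp (LL t σ) * (|LL t σ| ^ k * Real.exp |d * LL t σ|) ≤ 48 * (1 + σ ^ 2) * (1 + t ^ 2) := by
  have h0 : 0 < |t| := abs_pos.2 ht
  have hu : 0 < σ * |t| := by positivity
  have hexp1 : Real.exp (LL t σ) = σ * |t| := Real.exp_log hu
  set L := LL t σ
  have h1 : |L| ^ k ≤ 48 * Real.exp (|L| / 2) := by
    have h := Real.pow_div_factorial_le_exp (x := |L| / 2) (by positivity) k
    have hp := Real.exp_pos (|L|/2)
    rw [div_le_iff₀ (by positivity)] at h
    have h1 := Real.one_le_exp (x := |L| / 2) (by positivity)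
    interval_cases k <;> norm_num [Nat.factorial] at h ⊢ <;> nlinarith [sq_abs L]
  have h2 : Real.exp |d * L| ≤ Real.exp (|L| / 2) := by
    rw [abs_mul]; apply Real.exp_le_exp.2; nlinarith [abs_nonneg L]
  have h3 : Real.exp L * (Real.exp (|L| / 2) * Real.exp (|L| / 2)) ≤ 1 + σ ^ 2 * t ^ 2 := by
    rw [← Real.exp_add, ← Real.exp_add]
    rcases le_total 0 L with h | h
    · rw [abs_of_nonneg h, show L + (L / 2 + L / 2) = L + L by ring, Real.exp_add, hexp1]
      nlinarith [sq_abs t]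
    · rw [abs_of_nonpos h, show L + (-L / 2 + -L / 2) = 0 by ring, Real.exp_zero]
      nlinarith [mul_nonneg (sq_nonneg σ) (sq_nonneg t)]
  calc _ ≤ Real.exp L * ((48 * Real.exp (|L| / 2)) * Real.exp (|L| / 2)) := by gcongr
    _ = 48 * (Real.exp L * (Real.exp (|L| / 2) * Real.exp (|L| / 2))) := by ring
    _ ≤ 48 * (1 + σ ^ 2 * t ^ 2) := by linarith
    _ ≤ _ := by nlinarith [sq_nonneg σ, sq_nonneg t]

lemma PB.Y {σ : ℝ} (hσ : 0 < σ) (k : ℕ) (hk : k ≤ 3) : PB (fun a t => YY k t σ a) := by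
  refine ⟨48 * (1 + σ ^ 2), by positivity, fun a t ha ht => le_trans ?_ (atom_bd hσ ht ha k hk)⟩
  change |YY k t σ a| ≤ _
  rw [YY, show a * LL t σ = LL t σ + (a - 1) * LL t σ by ring, Real.exp_add, abs_mul, abs_mul,
    Real.abs_exp, Real.abs_exp, abs_pow, mul_left_comm]
  gcongr
  exact le_abs_self _

lemma PB.X {σ : ℝ} (hσ : 0 < σ) (k : ℕ) (hk : k ≤ 3) (g : ℝ → ℝ) (C : ℝ) (hC : 0 < C)
    (hg : ∀ x, |g x| ≤ C * Real.exp |x|) :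
    PB (fun a t => Real.exp (LL t σ) * (LL t σ ^ k * g ((a - 1) * LL t σ))) := by
  refine ⟨C * (48 * (1 + σ ^ 2)), by positivity, fun a t ha ht => ?_⟩
  have := mul_le_mul_of_nonneg_left (atom_bd hσ ht ha k hk) hC.le
  rw [mul_assoc C]
  refine le_trans ?_ this
  rw [abs_mul, abs_mul, Real.abs_exp, abs_pow]
  calc _ ≤ Real.exp (LL t σ) * (|LL t σ| ^ k * (C * Real.exp |(a - 1) * LL t σ|)) := by
        gcongr; exact hg _
    _ = _ := by ring

lemma PB.X0 {σ : ℝ} (hσ : 0 < σ) : PB (fun a t => X0 t σ a) := by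
  obtain ⟨C, hC, h⟩ := gg_bd
  simpa only [pow_one, _root_.X0] using PB.X hσ 1 (by norm_num) gg C hC (fun x => (h x).1)
lemma PB.X1 {σ : ℝ} (hσ : 0 < σ) : PB (fun a t => X1 t σ a) := by
  obtain ⟨C, hC, h⟩ := gg_bd
  exact PB.X hσ 2 (by norm_num) _ C hC (fun x => (h x).2.1)
lemma PB.X2 {σ : ℝ} (hσ : 0 < σ) : PB (fun a t => X2 t σ a) := by
  obtain ⟨C, hC, h⟩ := gg_bd
  exact PB.X hσ 3 (by norm_num) _ C hC (fun x => (h x).2.2)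

lemma A1_bd {μ σ β : ℝ} (hσ : 0 < σ) (i : Fin 4) : PB (fun a t => A1 i ![μ, σ, a, β] t) := by
  have y0 := PB.Y hσ 0 (by norm_num)
  have y1 := PB.Y hσ 1 (by norm_num)
  fin_cases i <;> simp [A1]
  · exact PB.zero
  · exact ((PB.bmul BD.a y0).div_const _).neg
  · exact y1.neg
  · exact PB.zero

lemma A2_bd {μ σ β : ℝ} (hσ : 0 < σ) (i j : Fin 4) : PB (fun a t => A2 i j ![μ, σ, a, β] t) := by
  have y0 := PB.Y hσ 0 (by norm_num)
  have y1 := PB.Y hσ 1 (by norm_num)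
  have y2 := PB.Y hσ 2 (by norm_num)
  fin_cases i <;> fin_cases j <;> simp [A2] <;> try exact PB.zero
  · exact (((((PB.bmul BD.a ((PB.bmul BD.a y0).div_const _)).mul_const _).sub (PB.bmul BD.a y0)).div_const _).neg)
  · exact ((y0.add (PB.bmul BD.a y1)).div_const _).neg
  · exact ((y0.add (PB.bmul BD.a y1)).div_const _).neg
  · exact y2.neg

lemma B1_bd {μ σ β : ℝ} (hσ : 0 < σ) (i : Fin 4) : PB (fun a t => B1 i ![μ, σ, a, β] t) := by
  have y0 := PB.Y hσ 0 (by norm_num)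
  have x0 := PB.X0 hσ
  have x1 := PB.X1 hσ
  fin_cases i <;> simp [B1]
  · exact PB.t
  · exact (PB.bmul (BD.const β) (PB.bmul BD.sign (PB.bmul BD.T0 ((x0.add y0).div_const _)))).neg
  · exact (PB.bmul (BD.const β) (PB.bmul BD.sign ((PB.bmul BD.T1 x0).add (PB.bmul BD.T0 x1)))).neg
  · exact (PB.bmul BD.sign (PB.bmul BD.T0 x0)).neg

lemma B2_bd {μ σ β : ℝ} (hσ : 0 < σ) (i j : Fin 4) : PB (fun a t => B2 i j ![μ, σ, a, β] t) := by
  have y0 := PB.Y hσ 0 (by norm_num)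
  have y1 := PB.Y hσ 1 (by norm_num)
  have x0 := PB.X0 hσ
  have x1 := PB.X1 hσ
  have x2 := PB.X2 hσ
  have t0 := (PB.bmul BD.T0 ((x0.add y0).div_const σ))
  have t1 := ((PB.bmul BD.T1 x0).add (PB.bmul BD.T0 x1))
  have t2 := (PB.bmul BD.T1 ((x0.add y0).div_const σ)).add (PB.bmul BD.T0 ((x1.add y1).div_const σ))
  fin_cases i <;> fin_cases j <;> simp [B2] <;> try exact PB.zero
  · exact (PB.bmul (BD.const β) (PB.bmul BD.sign (PB.bmul BD.T0
      ((((((x0.add y0).div_const _).add ((PB.bmul BD.a y0).div_const _)).mul_const _).sub (x0.add y0)).div_const _)))).neg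
  · exact (PB.bmul (BD.const β) (PB.bmul BD.sign t2)).neg
  · exact (PB.bmul BD.sign t0).neg
  · exact (PB.bmul (BD.const β) (PB.bmul BD.sign t2)).neg
  · exact (PB.bmul (BD.const β) (PB.bmul BD.sign (((PB.bmul BD.T2 x0).add (PB.bmul BD.T1 x1)).add ((PB.bmul BD.T1 x1).add (PB.bmul BD.T0 x2))))).neg
  · exact (PB.bmul BD.sign t1).neg
  · exact (PB.bmul BD.sign t0).neg
  · exact (PB.bmul BD.sign t1).neg

lemma exp_bd {σ : ℝ} (hσ : 0 < σ) : ∃ C : ℝ, 0 ≤ C ∧ ∀ (μ β a t : ℝ), |a - 1| < 1/2 → t ≠ 0 →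
    Real.exp (AA ![μ, σ, a, β] t) * (1 + t ^ 2) ^ 4 ≤ C := by
  refine ⟨16 + 8 * (Nat.factorial 16 / σ ^ 8) * 3, by positivity, fun μ β a t ha ht => ?_⟩
  have h0 : 0 < |t| := abs_pos.2 ht
  have hu : 0 < σ * |t| := by positivity
  have hA : AA ![μ, σ, a, β] t = - Real.exp (a * LL t σ) := by simp [AA, YY]
  have ha' := abs_lt.1 ha
  rw [hA]
  set y := Real.exp (a * LL t σ) with hy
  have hy0 : 0 < y := Real.exp_pos _
  have he1 : Real.exp (-y) ≤ 1 := Real.exp_le_one_iff.2 (by linarith)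
  have hpoly : (1 + t ^ 2) ^ 4 ≤ 8 * (1 + t ^ 8) := by
    nlinarith [sq_nonneg (t^2 - 1), sq_nonneg (t^4 - 1), sq_nonneg (t^3 - t), sq_nonneg (t^4-t^2), sq_nonneg t, sq_nonneg (t^2), sq_nonneg (t^3), sq_nonneg (t^4)]
  have he8 : Real.exp (-y) * t ^ 8 ≤ 1 / σ ^ 8 + Nat.factorial 16 / σ ^ 8 := by
    have ht8 : t ^ 8 = (σ * |t|) ^ 8 / σ ^ 8 := by
      rw [mul_pow, show |t| ^ 8 = (|t|^2)^4 by ring, sq_abs]; field_simp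
    rcases le_total (σ * |t|) 1 with h | h
    · have : t ^ 8 ≤ 1 / σ ^ 8 := by
        rw [ht8]; gcongr; exact pow_le_one₀ hu.le h
      have h8 : 0 ≤ t ^ 8 := by positivity
      have h9 : (0:ℝ) ≤ Nat.factorial 16 / σ ^ 8 := by positivity
      nlinarith
    · have hL : 0 ≤ LL t σ := Real.log_nonneg h
      have hexp1 : Real.exp (LL t σ) = σ * |t| := Real.exp_log hu
      have h16 : (σ * |t|) ^ 8 ≤ y ^ 16 := by
        have e : (σ * |t|) ^ 8 = Real.exp (8 * LL t σ) := by
          rw [← hexp1, ← Real.exp_nat_mul]; norm_num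
        rw [e, hy, ← Real.exp_nat_mul]
        apply Real.exp_le_exp.2
        push_cast
        nlinarith
      have hf := Real.pow_div_factorial_le_exp (x := y) (hx := hy0.le) 16
      rw [div_le_iff₀ (by positivity)] at hf
      have h1 : Real.exp (-y) * (σ * |t|) ^ 8 ≤ Nat.factorial 16 := by
        calc _ ≤ Real.exp (-y) * (Real.exp y * Nat.factorial 16) := by gcongr; linarith
          _ = _ := by rw [← mul_assoc, ← Real.exp_add]; simp
      rw [ht8, ← mul_div_assoc]
      have : (0:ℝ) ≤ 1 / σ ^ 8 := by positivity
      have h2 : Real.exp (-y) * (σ * |t|) ^ 8 / σ ^ 8 ≤ Nat.factorial 16 / σ ^ 8 := by gcongr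
      linarith
  have hle : 1 / σ ^ 8 ≤ (Nat.factorial 16 : ℝ) / σ ^ 8 := by
    gcongr; exact_mod_cast Nat.factorial_pos 16
  calc _ ≤ Real.exp (-y) * (8 * (1 + t ^ 8)) := by gcongr
    _ = 8 * Real.exp (-y) + 8 * (Real.exp (-y) * t ^ 8) := by ring
    _ ≤ _ := by
      have : (0:ℝ) ≤ Nat.factorial 16 / σ ^ 8 := by positivity
      linarith

lemma final_bd {σ : ℝ} (hσ : 0 < σ) (μ β : ℝ) (F : ℝ → ℝ → ℂ) (C : ℝ) (hC : 0 ≤ C)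
    (hF : ∀ a t, |a - 1| < 1/2 → t ≠ 0 → ‖F a t‖ ≤ Real.exp (AA ![μ, σ, a, β] t) * (C * (1 + t ^ 2) ^ 3)) :
    ∃ ε ∈ Set.Ioo (0 : ℝ) 1, ∃ h : ℝ → ℝ, MeasureTheory.Integrable h ∧
      ∀ α : ℝ, |α - 1| < ε → α ∈ Set.Ioo (0 : ℝ) 2 → ∀ t : ℝ, t ≠ 0 → ‖F α t‖ ≤ h t := by
  obtain ⟨D, hD, h⟩ := exp_bd hσ
  refine ⟨1/2, by norm_num, fun t => (C * D) * (1 + t ^ 2)⁻¹, integrable_inv_one_add_sq.const_mul _, ?_⟩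
  intro a ha _ t ht
  refine (hF a t ha ht).trans ?_
  have hp : 0 < 1 + t ^ 2 := by positivity
  change _ ≤ C * D * (1 + t ^ 2)⁻¹
  rw [← div_eq_mul_inv, le_div_iff₀ hp]
  calc _ = C * (Real.exp (AA ![μ, σ, a, β] t) * (1 + t ^ 2) ^ 4) := by ring
    _ ≤ _ := by gcongr; exact h _ _ _ _ ha ht

lemma norm_cis (a b : ℝ) : ‖(a : ℂ) + Complex.I * (b : ℂ)‖ ≤ |a| + |b| := by
  refine (norm_add_le _ _).trans ?_
  simp

lemma norm_E (a b : ℝ) : ‖Complex.exp ((a : ℂ) + Complex.I * (b : ℂ))‖ = Real.exp a := by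
  rw [Complex.norm_exp]; simp

lemma D1_bd {σ : ℝ} (hσ : 0 < σ) (μ β : ℝ) (i : Fin 4) : ∃ C : ℝ, 0 ≤ C ∧ ∀ a t : ℝ, |a - 1| < 1/2 → t ≠ 0 →
    ‖(A1 i ![μ, σ, a, β] t : ℂ) + Complex.I * (B1 i ![μ, σ, a, β] t : ℂ)‖ ≤ C * (1 + t ^ 2) := by
  obtain ⟨C, hC, h⟩ := A1_bd (μ := μ) (β := β) hσ i
  obtain ⟨D, hD, k⟩ := B1_bd (μ := μ) (β := β) hσ i
  exact ⟨C + D, by positivity, fun a t ha ht => (norm_cis _ _).trans (by linarith [h a t ha ht, k a t ha ht])⟩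

lemma D2_bd {σ : ℝ} (hσ : 0 < σ) (μ β : ℝ) (i j : Fin 4) : ∃ C : ℝ, 0 ≤ C ∧ ∀ a t : ℝ, |a - 1| < 1/2 → t ≠ 0 →
    ‖(A2 i j ![μ, σ, a, β] t : ℂ) + Complex.I * (B2 i j ![μ, σ, a, β] t : ℂ)‖ ≤ C * (1 + t ^ 2) := by
  obtain ⟨C, hC, h⟩ := A2_bd (μ := μ) (β := β) hσ i j
  obtain ⟨D, hD, k⟩ := B2_bd (μ := μ) (β := β) hσ i j
  exact ⟨C + D, by positivity, fun a t ha ht => (norm_cis _ _).trans (by linarith [h a t ha ht, k a t ha ht])⟩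

lemma mem_UU {σ : ℝ} (hσ : 0 < σ) (μ β : ℝ) {a : ℝ} (ha : |a - 1| < 1/2) : ![μ, σ, a, β] ∈ UU :=
  ⟨hσ, ha⟩

/-- Integrable domination of the parameter derivatives of `φ` uniformly
in `α` near `1`: for fixed `μ ∈ ℝ`, `σ > 0`, `β ∈ (−1,1)`, there are `ε ∈ (0,1)` and an
integrable `h` dominating `|φ_α(t)|` for all `α` with `|α − 1| < ε`, `α ∈ (0,2)`, `t ≠ 0`;
and analogous integrable dominating functions exist for each `φ_{θᵢ}`, each `t·φ_{θᵢ}`,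
and each `φ_{θᵢθⱼ}`. -/
theorem phi_derivs_dominated_near_alpha_one
    (μ σ β : ℝ) (hσ : 0 < σ) (hβ : β ∈ Set.Ioo (-1 : ℝ) 1) :
    (∃ ε ∈ Set.Ioo (0 : ℝ) 1, ∃ h : ℝ → ℝ, MeasureTheory.Integrable h ∧
      ∀ α : ℝ, |α - 1| < ε → α ∈ Set.Ioo (0 : ℝ) 2 → ∀ t : ℝ, t ≠ 0 →
        ‖phiP 2 ![μ, σ, α, β] t‖ ≤ h t) ∧
    (∀ i : Fin 4, ∃ ε ∈ Set.Ioo (0 : ℝ) 1, ∃ h : ℝ → ℝ, MeasureTheory.Integrable h ∧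
      ∀ α : ℝ, |α - 1| < ε → α ∈ Set.Ioo (0 : ℝ) 2 → ∀ t : ℝ, t ≠ 0 →
        ‖phiP i ![μ, σ, α, β] t‖ ≤ h t) ∧
    (∀ i : Fin 4, ∃ ε ∈ Set.Ioo (0 : ℝ) 1, ∃ h : ℝ → ℝ, MeasureTheory.Integrable h ∧
      ∀ α : ℝ, |α - 1| < ε → α ∈ Set.Ioo (0 : ℝ) 2 → ∀ t : ℝ, t ≠ 0 →
        ‖(t : ℂ) * phiP i ![μ, σ, α, β] t‖ ≤ h t) ∧
    (∀ i j : Fin 4, ∃ ε ∈ Set.Ioo (0 : ℝ) 1, ∃ h : ℝ → ℝ, MeasureTheory.Integrable h ∧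
      ∀ α : ℝ, |α - 1| < ε → α ∈ Set.Ioo (0 : ℝ) 2 → ∀ t : ℝ, t ≠ 0 →
        ‖phiPP i j ![μ, σ, α, β] t‖ ≤ h t) := by
  have first : ∀ i : Fin 4, ∃ ε ∈ Set.Ioo (0 : ℝ) 1, ∃ h : ℝ → ℝ, MeasureTheory.Integrable h ∧
      ∀ α : ℝ, |α - 1| < ε → α ∈ Set.Ioo (0 : ℝ) 2 → ∀ t : ℝ, t ≠ 0 →
        ‖phiP i ![μ, σ, α, β] t‖ ≤ h t := by
    intro i
    obtain ⟨C, hC, h⟩ := D1_bd hσ μ β i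
    refine final_bd hσ μ β (fun a t => phiP i ![μ, σ, a, β] t) C hC fun a t ha ht => ?_
    rw [phiP_eq (mem_UU hσ μ β ha) ht, norm_mul, norm_E]
    gcongr
    refine (h a t ha ht).trans ?_
    gcongr
    exact le_self_pow₀ (by nlinarith [sq_nonneg t]) (by norm_num)
  refine ⟨first 2, first, fun i => ?_, fun i j => ?_⟩
  · obtain ⟨C, hC, h⟩ := D1_bd hσ μ β i
    refine final_bd hσ μ β (fun a t => (t : ℂ) * phiP i ![μ, σ, a, β] t) C hC fun a t ha ht => ?_
    rw [phiP_eq (mem_UU hσ μ β ha) ht, norm_mul, norm_mul, norm_E, Complex.norm_real, Real.norm_eq_abs,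
      mul_left_comm]
    refine mul_le_mul_of_nonneg_left ?_ (Real.exp_pos _).le
    have h1 : |t| ≤ 1 + t ^ 2 := by rw [← sq_abs]; nlinarith [sq_nonneg (|t| - 1)]
    calc _ ≤ (1 + t ^ 2) * (C * (1 + t ^ 2)) := by gcongr; exact h a t ha ht
      _ = C * (1 + t ^ 2) ^ 2 := by ring
      _ ≤ _ := by
        gcongr
        · nlinarith [sq_nonneg t]
        · norm_num
  · obtain ⟨C, hC, h⟩ := D1_bd hσ μ β i
    obtain ⟨C', hC', h'⟩ := D1_bd hσ μ β j
    obtain ⟨D, hD, k⟩ := D2_bd hσ μ β i j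
    refine final_bd hσ μ β (fun a t => phiPP i j ![μ, σ, a, β] t) (C' * C + D) (by positivity) fun a t ha ht => ?_
    have h1 : 1 ≤ 1 + t ^ 2 := by nlinarith [sq_nonneg t]
    rw [phiPP_eq (mem_UU hσ μ β ha) ht, mul_assoc, ← mul_add, norm_mul, norm_E]
    gcongr
    refine (norm_add_le _ _).trans ?_
    rw [norm_mul, add_mul]
    apply add_le_add
    · calc _ ≤ (C' * (1 + t ^ 2)) * (C * (1 + t ^ 2)) := by
            gcongr
            · exact h' a t ha ht
            · exact h a t ha ht
        _ = C' * C * (1 + t ^ 2) ^ 2 := by ring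
        _ ≤ _ := by
          gcongr
          norm_num
    · refine (k a t ha ht).trans ?_
      gcongr
      exact le_self_pow₀ h1 (by norm_num)
end

section
/- At the Cauchy point (μ,σ,α,β) = (0,1,1,0), the Fisher information entries I_{θiθj} = π∫_ℝ (1 + x²)·f_{θi}(x)·f_{θj}(x) dx take the exact values: I_{μμ} = I_{σσ} = 1/2; I_{αα} = (1/2){π²/6 + (γ + log 2 − 1)²} where γ is Euler's constant; I_{ββ} = (2/π²){π²/6 + (γ + log 2 − 1)²}; I_{σα} = (1/2)(1 − γ − log 2); I_{μβ} = (1/π)(γ + log 2 − 1); and I_{μσ} = I_{μα} = I_{αβ} = I_{σβ} = 0. -/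
open MeasureTheory

noncomputable section

/-- Cumulant derivatives `ψ_μ, ψ_σ, ψ_α, ψ_β` of the (M₀) parameterization at the Cauchy
point `(μ,σ,α,β) = (0,1,1,0)` (the `α`- and `β`-derivatives being limits as `α → 1` of the
`α ≠ 1` expressions): `ψ_μ(t) = it`, `ψ_σ(t) = −|t|`, `ψ_α(t) = −|t| log|t|`,
`ψ_β(t) = −i(2/π) t log|t|`. -/
def psiC (i : Fin 4) (t : ℝ) : ℂ :=
  if i = 0 then Complex.I * (t : ℂ)
  else if i = 1 then ((-|t| : ℝ) : ℂ)
  else if i = 2 then ((-(|t| * Real.log |t|) : ℝ) : ℂ)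
  else -Complex.I * ((2 / Real.pi * t * Real.log |t| : ℝ) : ℂ)

/-- Parameter derivatives of the (M₀) stable density at the Cauchy point, via the inversion
formula `f_{θᵢ}(x) = (1/2π) ∫ e^{−itx} ψ_{θᵢ}(t) e^{−|t|} dt`. -/
def fPc (i : Fin 4) (x : ℝ) : ℝ :=
  (1 / (2 * Real.pi)) *
    (∫ t : ℝ, Complex.exp (-Complex.I * (t : ℂ) * (x : ℂ)) * psiC i t *
      Complex.exp (((-|t| : ℝ) : ℂ))).re

/-- Fisher information entries at the Cauchy point:
`I_{θᵢθⱼ} = π ∫ (1 + x²) f_{θᵢ}(x) f_{θⱼ}(x) dx`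
(using that the Cauchy density is `1/(π(1+x²))`). -/
def IC (i j : Fin 4) : ℝ := Real.pi * ∫ x : ℝ, (1 + x ^ 2) * fPc i x * fPc j x

end

section part1
open Complex Set Filter Topology

lemma gam2 : Complex.Gamma 2 = 1 := by
  have h := Complex.Gamma_nat_eq_factorial 1
  rw [Nat.cast_one, one_add_one_eq_two] at h
  simpa using h

lemma lap_real (r : ℝ) (hr : 0 < r) :
    IntegrableOn (fun t : ℝ => ((t * Real.log t : ℝ) : ℂ) * cexp (-((r : ℂ) * t))) (Ioi 0) ∧
    (∫ t in Ioi (0:ℝ), ((t * Real.log t : ℝ) : ℂ) * cexp (-((r : ℂ) * t))) =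
      (1 / (r:ℂ)) ^ 2 * ((1 - Real.eulerMascheroniConstant : ℝ) + Complex.log (1 / (r : ℂ))) := by
  have hcont : Continuous (fun t : ℝ => cexp (-((r : ℂ) * t))) := by fun_prop
  have hnorm : ∀ t : ℝ, ‖cexp (-((r : ℂ) * t))‖ = Real.exp (-r * t) := by
    intro t; rw [Complex.norm_exp]; simp
  have key := mellin_hasDerivAt_of_isBigO_rpow (a := 3) (b := 0) (s := 2)
    (f := fun t : ℝ => cexp (-((r : ℂ) * t)))
    (hcont.locallyIntegrable.locallyIntegrableOn _)
    (by
      have := (isLittleO_exp_neg_mul_rpow_atTop hr (-3)).isBigO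
      refine Asymptotics.IsBigO.trans (Asymptotics.IsBigO.of_bound 1 ?_) this
      filter_upwards with t
      rw [hnorm]; simp)
    (by norm_num)
    (by
      refine Asymptotics.IsBigO.of_bound 1 ?_
      filter_upwards [self_mem_nhdsWithin] with t ht
      have ht : 0 < t := ht
      rw [hnorm]; simp; positivity)
    (by norm_num)
  obtain ⟨h1, h2⟩ := key
  have hfun : ∀ t ∈ Ioi (0:ℝ), (t : ℂ) ^ ((2:ℂ) - 1) • (Real.log t • cexp (-((r : ℂ) * t)))
      = ((t * Real.log t : ℝ) : ℂ) * cexp (-((r : ℂ) * t)) := by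
    intro t ht
    norm_num
    ring
  constructor
  · exact (integrableOn_congr_fun hfun measurableSet_Ioi).1 h1
  · rw [← setIntegral_congr_fun measurableSet_Ioi hfun]
    have hr' : (1 / (r:ℂ)) ≠ 0 := by
      simp [hr.ne']
    have hm : mellin (fun t : ℝ => cexp (-((r : ℂ) * t))) =ᶠ[𝓝 2]
        fun a => (1 / (r:ℂ)) ^ a * Complex.Gamma a := by
      have : ∀ᶠ a : ℂ in 𝓝 2, 0 < a.re :=
        (isOpen_lt continuous_const Complex.continuous_re).mem_nhds (by simp)
      filter_upwards [this] with a ha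
      rw [← Complex.integral_cpow_mul_exp_neg_mul_Ioi ha hr]
      rfl
    have hG : HasDerivAt Complex.Gamma (1 - Real.eulerMascheroniConstant : ℝ) 2 := by
      have := Complex.hasDerivAt_Gamma_nat 1
      norm_num at this
      convert this using 1
      push_cast; ring
    have h3 : HasDerivAt (fun a : ℂ => (1 / (r:ℂ)) ^ a * Complex.Gamma a) _ 2 :=
      ((hasDerivAt_id (2:ℂ)).const_cpow (Or.inl hr')).mul hG
    have h4 := (h2.congr_of_eventuallyEq hm.symm).unique h3
    refine h4.trans ?_
    have : Complex.Gamma 2 = 1 := gam2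
    simp only [id_eq, this]
    have e : (1 / (r:ℂ)) ^ (2:ℂ) = (1 / (r:ℂ)) ^ 2 := by
      exact_mod_cast Complex.cpow_natCast (1 / (r:ℂ)) 2
    rw [e]; ring

lemma lap_real0 (r : ℝ) (hr : 0 < r) :
    IntegrableOn (fun t : ℝ => (t : ℂ) * cexp (-((r : ℂ) * t))) (Ioi 0) ∧
    (∫ t in Ioi (0:ℝ), (t : ℂ) * cexp (-((r : ℂ) * t))) = (1 / (r:ℂ)) ^ 2 := by
  have h := Complex.integral_cpow_mul_exp_neg_mul_Ioi (a := 2) (by norm_num) hr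
  have e : (1 / (r:ℂ)) ^ (2:ℂ) = (1 / (r:ℂ)) ^ 2 := by
      exact_mod_cast Complex.cpow_natCast (1 / (r:ℂ)) 2
  have : Complex.Gamma 2 = 1 := gam2
  have h' : (∫ t in Ioi (0:ℝ), (t : ℂ) * cexp (-((r : ℂ) * t))) = (1 / (r:ℂ)) ^ 2 := by
    rw [this, mul_one, e] at h
    rw [← h]
    norm_num
  refine ⟨?_, h'⟩
  by_contra hc
  rw [integral_undef hc] at h'
  have : (1 / (r:ℂ)) ^ 2 ≠ 0 := by simp [hr.ne']
  exact this h'.symm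

lemma lap_diff (g : ℝ → ℂ) 
    (hg : ∀ δ : ℝ, 0 < δ → IntegrableOn (fun t : ℝ => g t * cexp (-((δ : ℂ) * t))) (Ioi 0)) :
    (∀ r : ℂ, 0 < r.re → IntegrableOn (fun t : ℝ => g t * cexp (-(r * t))) (Ioi 0)) ∧
    DifferentiableOn ℂ (fun r : ℂ => ∫ t in Ioi (0:ℝ), g t * cexp (-(r * t))) {r | 0 < r.re} := by
  have hnorm : ∀ (r : ℂ) (t : ℝ), ‖cexp (-(r * t))‖ = Real.exp (-r.re * t) := by
    intro r t; rw [Complex.norm_exp]; simp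
  have hI : ∀ r : ℂ, 0 < r.re → IntegrableOn (fun t : ℝ => g t * cexp (-(r * t))) (Ioi 0) := by
    intro r hr
    have h1 := hg r.re hr
    have := h1.mul_bdd (g := fun t : ℝ => cexp (-(((r.im : ℂ) * I) * t))) (c := 1)
      (by fun_prop) (by filter_upwards with t; rw [hnorm]; simp)
    refine this.congr ?_
    filter_upwards with t
    rw [mul_assoc, ← Complex.exp_add]
    congr 2
    conv_rhs => rw [← Complex.re_add_im r]
    ring
  refine ⟨hI, fun r hr => ?_⟩
  have hr : 0 < r.re := hr
  set δ := r.re / 2 with hδ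
  have hδ0 : 0 < δ := by positivity
  refine (HasDerivAt.differentiableAt (hasDerivAt_integral_of_dominated_loc_of_deriv_le
    (μ := volume.restrict (Ioi 0)) (F := fun (r : ℂ) (t : ℝ) => g t * cexp (-(r * t)))
    (F' := fun (r : ℂ) (t : ℝ) => g t * (cexp (-(r * t)) * (-t)))
    (s := {z : ℂ | δ < z.re}) (x₀ := r)
    (bound := fun t => (2 / δ) * ‖g t * cexp (-(((δ/2 : ℝ) : ℂ) * t))‖)
    ?_ ?_ (hI r hr) ?_ ?_ ?_ ?_).2).differentiableWithinAt
  · exact (isOpen_lt continuous_const Complex.continuous_re).mem_nhds (by simp [hδ]; linarith)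
  · filter_upwards [(isOpen_lt continuous_const Complex.continuous_re).mem_nhds hr] with z hz
    exact (hI z hz).aestronglyMeasurable
  · have := (hI r hr).aestronglyMeasurable.mul (g := fun t : ℝ => (-t : ℂ)) (by fun_prop)
    refine this.congr ?_
    filter_upwards with t
    simp [mul_assoc]
  · refine (ae_restrict_iff' measurableSet_Ioi).2 ?_
    filter_upwards with t ht z hz
    have ht : 0 < t := ht
    have hz : δ < z.re := hz
    rw [norm_mul, norm_mul, norm_mul, hnorm, hnorm]
    simp only [norm_neg, Complex.norm_real, Real.norm_eq_abs, abs_of_pos ht, ofReal_re]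
    have h1 : Real.exp (-z.re * t) ≤ Real.exp (-(δ/2) * t) * Real.exp (-(δ/2 * t)) := by
      rw [← Real.exp_add]
      apply Real.exp_le_exp.2
      nlinarith
    have h2 : Real.exp (-(δ/2 * t)) * t ≤ 2 / δ := by
      rw [Real.exp_neg, inv_mul_le_iff₀ (Real.exp_pos _)]
      have := Real.add_one_le_exp (δ/2 * t)
      calc t = (δ/2*t) * (2/δ) := by field_simp
        _ ≤ _ := by gcongr; linarith
    calc ‖g t‖ * (Real.exp (-z.re * t) * t) 
        ≤ ‖g t‖ * (Real.exp (-(δ/2) * t) * Real.exp (-(δ/2 * t)) * t) := by gcongr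
      _ = ‖g t‖ * Real.exp (-(δ/2) * t) * (Real.exp (-(δ/2 * t)) * t) := by ring
      _ ≤ ‖g t‖ * Real.exp (-(δ/2) * t) * (2 / δ) := by gcongr
      _ = _ := by ring
  · exact (hg (δ/2) (by positivity)).norm.const_mul _
  · filter_upwards with t z hz
    have h : HasDerivAt (fun z : ℂ => -(z * t)) (-(t:ℂ)) z := by
      have := ((hasDerivAt_id z).mul_const (t:ℂ)).neg
      rw [one_mul] at this
      exact this
    exact (h.cexp).const_mul (g t)

lemma lap_ident (Φ Ψ : ℂ → ℂ) (h1 : DifferentiableOn ℂ Φ {r | 0 < r.re})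
    (h2 : DifferentiableOn ℂ Ψ {r | 0 < r.re}) (h : ∀ r : ℝ, 0 < r → Φ r = Ψ r) (s : ℂ)
    (hs : 0 < s.re) : Φ s = Ψ s := by
  have ho : IsOpen {r : ℂ | 0 < r.re} := isOpen_lt continuous_const Complex.continuous_re
  refine (h1.analyticOnNhd ho).eqOn_of_preconnected_of_frequently_eq (h2.analyticOnNhd ho)
    (convex_halfSpace_re_gt 0).isPreconnected (z₀ := 1) (by simp) ?_ hs
  have ht : Tendsto (fun x : ℝ => (x : ℂ)) (𝓝[≠] 1) (𝓝[≠] 1) := by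
    refine tendsto_nhdsWithin_iff.2 ⟨?_, ?_⟩
    · exact (Complex.continuous_ofReal.tendsto' 1 1 (by simp)).mono_left nhdsWithin_le_nhds
    · filter_upwards [self_mem_nhdsWithin] with x hx
      simpa using hx
  refine ht.frequently (Eventually.frequently ?_)
  filter_upwards [mem_nhdsWithin_of_mem_nhds (lt_mem_nhds (zero_lt_one (α := ℝ)))] with x hx
  exact h x hx

lemma lap0 (s : ℂ) (hs : 0 < s.re) :
    IntegrableOn (fun t : ℝ => (t : ℂ) * cexp (-(s * t))) (Ioi 0) ∧
    (∫ t in Ioi (0:ℝ), (t : ℂ) * cexp (-(s * t))) = (1 / s) ^ 2 := by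
  obtain ⟨h1, h2⟩ := lap_diff (fun t => (t:ℂ)) (fun δ hδ => (lap_real0 δ hδ).1)
  refine ⟨h1 s hs, lap_ident _ (fun s => (1 / s) ^ 2) h2 ?_ (fun r hr => (lap_real0 r hr).2) s hs⟩
  intro r hr
  have : r ≠ 0 := by rintro rfl; simp at hr
  exact DifferentiableAt.differentiableWithinAt (by fun_prop (disch := assumption))

lemma lap1 (s : ℂ) (hs : 0 < s.re) :
    IntegrableOn (fun t : ℝ => ((t * Real.log t : ℝ) : ℂ) * cexp (-(s * t))) (Ioi 0) ∧
    (∫ t in Ioi (0:ℝ), ((t * Real.log t : ℝ) : ℂ) * cexp (-(s * t))) = 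
      (1 / s) ^ 2 * ((1 - Real.eulerMascheroniConstant : ℝ) + Complex.log (1 / s)) := by
  obtain ⟨h1, h2⟩ := lap_diff (fun t => ((t * Real.log t : ℝ) : ℂ)) (fun δ hδ => (lap_real δ hδ).1)
  refine ⟨h1 s hs, lap_ident _ (fun s => (1 / s) ^ 2 * ((1 - Real.eulerMascheroniConstant : ℝ) + Complex.log (1 / s))) h2 ?_ (fun r hr => (lap_real r hr).2) s hs⟩
  intro r hr
  have hr : 0 < r.re := hr
  have : r ≠ 0 := by rintro rfl; simp at hr
  have h3 : 1 / r ∈ slitPlane := by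
    left
    rw [one_div, Complex.inv_re]
    have := Complex.normSq_pos.2 this
    positivity
  exact DifferentiableAt.differentiableWithinAt (by fun_prop (disch := assumption))

end part1

section part2
open Complex Set Filter Topology

noncomputable def wF (z : ℂ) : ℂ := (1 - Real.eulerMascheroniConstant : ℝ) + Complex.log ((1 + z) / 2)
noncomputable def fF (n m : ℕ) (z : ℂ) : ℂ := z ^ n * wF z ^ m
noncomputable def zz (θ : ℝ) : ℂ := cexp (-2 * θ * I)

lemma slit_of (z : ℂ) (h : -1 < z.re) : (1 + z) / 2 ∈ slitPlane := by
  left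
  simp; linarith

lemma fF_diff (n m : ℕ) (z : ℂ) (h : -1 < z.re) : DifferentiableAt ℂ (fF n m) z := by
  have := slit_of z h
  unfold fF wF
  fun_prop (disch := assumption)

lemma zz_re (θ : ℝ) : (zz θ).re = Real.cos (2 * θ) := by
  simp [zz, Complex.exp_re]

lemma zz_im (θ : ℝ) : (zz θ).im = -Real.sin (2 * θ) := by
  simp [zz, Complex.exp_im]

lemma zz_norm (θ : ℝ) : ‖zz θ‖ = 1 := by
  simp [zz, Complex.norm_exp]

lemma mean_r (n m : ℕ) (r : ℝ) (h0 : 0 < r) (h1 : r < 1) :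
    ∫ θ in Ioo (-(Real.pi / 2)) (Real.pi / 2), fF n m (r * zz θ) = Real.pi * fF n m 0 := by
  have hca : Real.circleAverage (fF n m) 0 r = fF n m 0 := by
    apply DiffContOnCl.circleAverage
    apply DifferentiableOn.diffContOnCl
    intro z hz
    refine (fF_diff n m z ?_).differentiableWithinAt
    have : ‖z‖ ≤ r := by
      have := Metric.closure_ball_subset_closedBall hz
      simpa [abs_of_pos h0] using this
    have := (abs_le.1 (Complex.abs_re_le_norm z)).1
    linarith
  rw [Real.circleAverage_eq_integral_add (-Real.pi)] at hca
  rw [← integral_Ioc_eq_integral_Ioo, ← intervalIntegral.integral_of_le (by linarith [Real.pi_pos])]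
  have h2 := intervalIntegral.integral_comp_mul_left (a := -(Real.pi / 2)) (b := Real.pi / 2) (c := -2)
    (fun φ => fF n m (circleMap 0 r φ)) (by norm_num)
  have h3 : ∀ θ : ℝ, fF n m (circleMap 0 r (-2 * θ)) = fF n m (r * zz θ) := by
    intro θ; simp [circleMap, zz]
  simp only [h3] at h2
  rw [h2]
  have h4 := intervalIntegral.integral_comp_add_right (a := 0) (b := 2 * Real.pi)
    (fun φ => fF n m (circleMap 0 r φ)) (-Real.pi)
  rw [h4] at hca
  rw [intervalIntegral.integral_symm, show (-2 * (Real.pi / 2)) = 0 + -Real.pi by ring,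
    show (-2 * (-(Real.pi / 2))) = 2 * Real.pi + -Real.pi by ring, ← hca]
  simp only [Complex.real_smul]
  push_cast
  have : (Real.pi : ℂ) ≠ 0 := by exact_mod_cast Real.pi_ne_zero
  field_simp

lemma bound_pt (n m : ℕ) (hm : m ≤ 2) : ∃ C : ℝ, 0 ≤ C ∧ ∀ r : ℝ, 1 / 2 ≤ r → r ≤ 1 →
    ∀ θ ∈ Ioo (-(Real.pi / 2)) (Real.pi / 2), ‖fF n m (r * zz θ)‖ ≤
      C * (Real.pi / 2 - θ) ^ (-(1/2) : ℝ) + C * (Real.pi / 2 + θ) ^ (-(1/2) : ℝ) := by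
  set K : ℝ := |1 - Real.eulerMascheroniConstant| + Real.pi + 4 with hK
  have hpi := Real.pi_pos
  have hK1 : 1 ≤ K := by
    have := abs_nonneg (1 - Real.eulerMascheroniConstant); linarith
  refine ⟨K ^ 2 * Real.pi ^ ((1/2) : ℝ), by positivity, ?_⟩
  intro r hr1 hr2 θ hθ
  have hcos : 0 < Real.cos θ := Real.cos_pos_of_mem_Ioo hθ
  set z : ℂ := r * zz θ with hz
  set u : ℝ := ‖(1 + z) / 2‖ with hu
  have hzn : ‖z‖ ≤ 1 := by
    rw [hz, norm_mul, zz_norm, Complex.norm_real, Real.norm_eq_abs, abs_of_pos (by linarith)]; linarith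
  have hu1 : u ≤ 1 := by
    rw [hu, norm_div]
    have := norm_add_le 1 z
    simp at this ⊢
    linarith
  have hu2 : Real.cos θ / 2 ≤ u := by
    have h1 : u ^ 2 = ((1 - r) ^ 2 + 4 * r * Real.cos θ ^ 2) / 4 := by
      rw [hu, ← Complex.normSq_eq_norm_sq, Complex.normSq_div, Complex.normSq_apply]
      simp [hz, zz_re, zz_im, Real.cos_two_mul, Real.sin_two_mul]
      have := Real.sin_sq_add_cos_sq θ
      have e : Real.sin θ ^ 2 = 1 - Real.cos θ ^ 2 := by linarith
      norm_num [Complex.normSq_apply]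
      ring_nf
      rw [e]; ring
    have hu0 : 0 ≤ u := norm_nonneg _
    refine abs_le_of_sq_le_sq' ?_ hu0 |>.2
    rw [h1]
    nlinarith [sq_nonneg (1 - r), sq_nonneg (Real.cos θ)]
  have hu0 : 0 < u := by linarith
  have hlog : |Real.log u| ≤ 4 * u ^ (-(1/4) : ℝ) := by
    have := Real.abs_log_mul_self_rpow_lt u (1/4) hu0 hu1 (by norm_num)
    rw [abs_mul, abs_of_pos (Real.rpow_pos_of_pos hu0 _)] at this
    rw [Real.rpow_neg hu0.le, ← div_eq_mul_inv, le_div_iff₀ (Real.rpow_pos_of_pos hu0 _)]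
    linarith
  have hone : 1 ≤ u ^ (-(1/4) : ℝ) := Real.one_le_rpow_of_pos_of_le_one_of_nonpos hu0 hu1 (by norm_num)
  have hw : ‖wF z‖ ≤ K * u ^ (-(1/4) : ℝ) := by
    have h1 : ‖Complex.log ((1 + z) / 2)‖ ≤ |Real.log u| + Real.pi := by
      refine (Complex.norm_le_abs_re_add_abs_im _).trans ?_
      rw [Complex.log_re, Complex.log_im]
      gcongr
      exact Complex.abs_arg_le_pi _
    have h2 : ‖wF z‖ ≤ |1 - Real.eulerMascheroniConstant| + (|Real.log u| + Real.pi) := by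
      unfold wF
      refine (norm_add_le _ _).trans ?_
      rw [Complex.norm_real, Real.norm_eq_abs]
      gcongr
    have := abs_nonneg (1 - Real.eulerMascheroniConstant)
    nlinarith
  have hf : ‖fF n m z‖ ≤ K ^ 2 * u ^ (-(1/2) : ℝ) := by
    unfold fF
    rw [norm_mul, norm_pow, norm_pow]
    have h1 : 1 ≤ K * u ^ (-(1/4) : ℝ) := by nlinarith
    calc ‖z‖ ^ n * ‖wF z‖ ^ m ≤ 1 * (K * u ^ (-(1/4) : ℝ)) ^ m := by
          gcongr
          exact pow_le_one₀ (norm_nonneg _) hzn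
      _ ≤ (K * u ^ (-(1/4) : ℝ)) ^ 2 := by
          rw [one_mul]; exact pow_le_pow_right₀ h1 hm
      _ = _ := by
          rw [mul_pow, ← Real.rpow_natCast (u ^ _), ← Real.rpow_mul hu0.le]; norm_num
  have gen : ∀ y : ℝ, 0 < y → y / Real.pi ≤ u → ‖fF n m z‖ ≤ 
      K ^ 2 * Real.pi ^ ((1/2) : ℝ) * y ^ (-(1/2) : ℝ) := by
    intro y hy hyu
    refine hf.trans ?_
    rw [mul_assoc]
    gcongr
    calc u ^ (-(1/2) : ℝ) ≤ (y / Real.pi) ^ (-(1/2) : ℝ) :=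
          Real.rpow_le_rpow_of_nonpos (by positivity) hyu (by norm_num)
      _ = _ := by
          rw [Real.div_rpow hy.le hpi.le, Real.rpow_neg hpi.le, div_inv_eq_mul, mul_comm]
  obtain ⟨ha, hb⟩ := hθ
  have p1 : 0 ≤ K ^ 2 * Real.pi ^ ((1/2) : ℝ) * (Real.pi / 2 - θ) ^ (-(1/2) : ℝ) := by
    have : 0 < Real.pi / 2 - θ := by linarith
    positivity
  have p2 : 0 ≤ K ^ 2 * Real.pi ^ ((1/2) : ℝ) * (Real.pi / 2 + θ) ^ (-(1/2) : ℝ) := by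
    have : 0 < Real.pi / 2 + θ := by linarith
    positivity
  rcases le_total 0 θ with h | h
  · have h1 := Real.one_sub_mul_le_cos h hb.le
    have := gen (Real.pi / 2 - θ) (by linarith) (by
      refine le_trans ?_ hu2
      rw [show (Real.pi / 2 - θ) / Real.pi = (1 - 2 / Real.pi * θ) / 2 by field_simp]
      gcongr)
    linarith
  · have h1 := Real.one_add_mul_le_cos ha.le h
    have := gen (Real.pi / 2 + θ) (by linarith) (by
      refine le_trans ?_ hu2
      rw [show (Real.pi / 2 + θ) / Real.pi = (1 + 2 / Real.pi * θ) / 2 by field_simp]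
      gcongr)
    linarith

lemma zz_re_gt {θ : ℝ} (hθ : θ ∈ Ioo (-(Real.pi / 2)) (Real.pi / 2)) : -1 < (zz θ).re := by
  rw [zz_re, Real.cos_two_mul]
  have : 0 < Real.cos θ := Real.cos_pos_of_mem_Ioo hθ
  have := pow_pos this 2
  linarith

lemma mean (n m : ℕ) (hm : m ≤ 2) :
    IntegrableOn (fun θ => fF n m (zz θ)) (Ioo (-(Real.pi / 2)) (Real.pi / 2)) ∧
    ∫ θ in Ioo (-(Real.pi / 2)) (Real.pi / 2), fF n m (zz θ) = Real.pi * fF n m 0 := by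
  obtain ⟨C, hC, hb⟩ := bound_pt n m hm
  have hpi := Real.pi_pos
  have hzc : Continuous zz := by unfold zz; fun_prop
  have hbi : IntegrableOn (fun θ : ℝ => C * (Real.pi / 2 - θ) ^ (-(1/2) : ℝ)
      + C * (Real.pi / 2 + θ) ^ (-(1/2) : ℝ)) (Ioo (-(Real.pi / 2)) (Real.pi / 2)) := by
    rw [← integrableOn_Ioc_iff_integrableOn_Ioo, ← intervalIntegrable_iff_integrableOn_Ioc_of_le (by linarith)]
    have h0 : IntervalIntegrable (fun x : ℝ => x ^ (-(1/2) : ℝ)) volume 0 Real.pi :=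
      intervalIntegral.intervalIntegrable_rpow' (by norm_num)
    have h1 := (h0.comp_sub_left (Real.pi / 2)).symm
    have h2 := h0.comp_add_left (Real.pi / 2)
    rw [show Real.pi / 2 - Real.pi = -(Real.pi / 2) by ring, sub_zero] at h1
    rw [show Real.pi - Real.pi / 2 = (Real.pi / 2) by ring, zero_sub] at h2
    exact (h1.const_mul C).add (h2.const_mul C)
  have hcont : ∀ r : ℝ, 0 < r → r ≤ 1 →
      ContinuousOn (fun θ => fF n m (r * zz θ)) (Ioo (-(Real.pi / 2)) (Real.pi / 2)) := by
    intro r hr0 hr1 θ hθ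
    have h1 : -1 < ((r:ℂ) * zz θ).re := by
      have := zz_re_gt hθ
      simp; nlinarith
    have h2 := (fF_diff n m _ h1).continuousAt
    exact (ContinuousAt.comp (f := fun θ => (r:ℂ) * zz θ) h2 (by fun_prop)).continuousWithinAt
  constructor
  · have hc := hcont 1 one_pos le_rfl
    refine hbi.mono' ?_ ?_
    · have := hc.aestronglyMeasurable measurableSet_Ioo (μ := volume)
      simpa using this
    · refine (ae_restrict_iff' measurableSet_Ioo).2 ?_
      filter_upwards with θ hθ
      have := hb 1 (by norm_num) le_rfl θ hθ
      simpa using this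
  · have hlim : Tendsto (fun r : ℝ => ∫ θ in Ioo (-(Real.pi / 2)) (Real.pi / 2), fF n m (r * zz θ))
        (𝓝[<] 1) (𝓝 (∫ θ in Ioo (-(Real.pi / 2)) (Real.pi / 2), fF n m (zz θ))) := by
      have hr : ∀ᶠ r : ℝ in 𝓝[<] 1, 1/2 ≤ r ∧ r ≤ 1 := by
        filter_upwards [self_mem_nhdsWithin, mem_nhdsWithin_of_mem_nhds
          (lt_mem_nhds (show (1/2 : ℝ) < 1 by norm_num))] with r h1 h2
        exact ⟨h2.le, le_of_lt h1⟩
      refine tendsto_integral_filter_of_dominated_convergence _ ?_ ?_ hbi ?_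
      · filter_upwards [hr] with r hr
        exact (hcont r (by linarith [hr.1]) hr.2).aestronglyMeasurable measurableSet_Ioo
      · filter_upwards [hr] with r hr
        refine (ae_restrict_iff' measurableSet_Ioo).2 ?_
        filter_upwards with θ hθ
        exact hb r hr.1 hr.2 θ hθ
      · refine (ae_restrict_iff' measurableSet_Ioo).2 ?_
        filter_upwards with θ hθ
        have h2 := (fF_diff n m _ (zz_re_gt hθ)).continuousAt
        have h3 : Tendsto (fun r : ℝ => (r:ℂ) * zz θ) (𝓝[<] 1) (𝓝 (zz θ)) := by
          have : Continuous (fun r : ℝ => (r:ℂ) * zz θ) := by fun_prop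
          exact (this.tendsto' 1 (zz θ) (by simp)).mono_left nhdsWithin_le_nhds
        exact h2.tendsto.comp h3
    refine tendsto_nhds_unique hlim (tendsto_const_nhds.congr' ?_)
    filter_upwards [self_mem_nhdsWithin, mem_nhdsWithin_of_mem_nhds
          (lt_mem_nhds (show (0 : ℝ) < 1 by norm_num))] with r h1 h2
    exact (mean_r n m r h2 h1).symm
end part2

section part3
open Complex Set Filter Topology

lemma half_int (g : ℝ → ℂ) (hg : ∀ t, g (-t) = (starRingEnd ℂ) (g t)) (hi : IntegrableOn g (Ioi 0)) :
    (∫ t, g t).re = 2 * (∫ t in Ioi 0, g t).re := by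
  have h1 : IntegrableOn (fun t => g (-t)) (Ioi 0) := by
    simp only [hg]
    exact (Complex.conjLIE.toContinuousLinearEquiv.toContinuousLinearMap).integrable_comp hi
  have h2 : IntegrableOn g (Iic 0) := by
    have := (integrableOn_Ici_iff_integrableOn_Ioi (by finiteness)).2 h1
    have := this.comp_neg
    simpa using this
  have h3 : ∫ t, g t = (∫ t in Iic 0, g t) + ∫ t in Ioi 0, g t := by
    rw [← setIntegral_union (Iic_disjoint_Ioi le_rfl) measurableSet_Ioi h2 hi,
          Iic_union_Ioi, Measure.restrict_univ]
  have h4 := integral_comp_neg_Ioi 0 g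
  rw [neg_zero] at h4
  rw [h3, ← h4]
  simp only [hg]
  rw [integral_conj, Complex.add_re, Complex.conj_re]
  ring

lemma psi_conj (i : Fin 4) (t : ℝ) : psiC i (-t) = (starRingEnd ℂ) (psiC i t) := by
  unfold psiC
  split_ifs
  · simp
  · simp
  · simp
  · simp only [map_mul, map_neg, Complex.conj_I, Complex.conj_ofReal, abs_neg]
    push_cast
    ring

lemma fPc_half (i : Fin 4) (x : ℝ) (k : ℂ) (h : ℝ → ℂ)
    (hi : IntegrableOn (fun t : ℝ => h t * cexp (-((1 + I * x) * t))) (Ioi 0))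
    (hpsi : ∀ t > 0, psiC i t = k * h t) :
    fPc i x = (1 / Real.pi) * (k * ∫ t in Ioi (0:ℝ), h t * cexp (-((1 + I * x) * t))).re := by
  have heq : ∀ t ∈ Ioi (0:ℝ), k * (h t * cexp (-((1 + I * x) * t))) =
      cexp (-I * (t : ℂ) * (x : ℂ)) * psiC i t * cexp (((-|t| : ℝ) : ℂ)) := by
    intro t ht
    have ht : 0 < t := ht
    rw [hpsi t ht, abs_of_pos ht, show -((1 + I * (x:ℂ)) * t) = -I * (t : ℂ) * (x : ℂ) + ((-t : ℝ) : ℂ) by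
      push_cast; ring, Complex.exp_add]
    ring
  unfold fPc
  rw [half_int]
  · rw [← setIntegral_congr_fun measurableSet_Ioi heq, integral_const_mul]
    ring
  · intro t
    simp only [map_mul, ← Complex.exp_conj, psi_conj, abs_neg, conj_ofReal]
    simp
  · exact (integrableOn_congr_fun heq measurableSet_Ioi).1 (hi.const_mul k)

lemma s_inv {θ : ℝ} (hθ : θ ∈ Ioo (-(Real.pi / 2)) (Real.pi / 2)) :
    1 / (1 + I * (Real.tan θ : ℝ)) = (1 + zz θ) / 2 := by
  have hc : Real.cos θ ≠ 0 := (Real.cos_pos_of_mem_Ioo hθ).ne'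
  have h := Real.sin_sq_add_cos_sq θ
  symm
  apply eq_one_div_of_mul_eq_one_left
  rw [Real.tan_eq_sin_div_cos]
  apply Complex.ext
  · simp [zz_re, zz_im, Real.cos_two_mul, Real.sin_two_mul, -ofReal_div, -ofReal_sin, -ofReal_cos]
    field_simp
    linarith
  · simp [zz_re, zz_im, Real.cos_two_mul, Real.sin_two_mul, -ofReal_div, -ofReal_sin, -ofReal_cos]
    field_simp
    ring

lemma sq_z (θ : ℝ) : ((1 + zz θ) / 2) ^ 2 = ((Real.cos θ ^ 2 : ℝ) : ℂ) * zz θ := by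
  have h := Real.sin_sq_add_cos_sq θ
  have e : Real.sin θ ^ 2 = 1 - Real.cos θ ^ 2 := by linarith
  apply Complex.ext
  · simp [pow_two, zz_re, zz_im, Real.cos_two_mul, Real.sin_two_mul, -ofReal_sin, -ofReal_cos]
    ring_nf
    rw [e]; ring
  · simp [pow_two, zz_re, zz_im, Real.cos_two_mul, Real.sin_two_mul, -ofReal_sin, -ofReal_cos]
    ring

lemma w_im {θ : ℝ} (hθ : θ ∈ Ioo (-(Real.pi / 2)) (Real.pi / 2)) : (wF (zz θ)).im = -θ := by
  have hc := Real.cos_pos_of_mem_Ioo hθ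
  have : (1 + zz θ) / 2 = ((Real.cos θ : ℝ) : ℂ) * (Complex.cos ((-θ : ℝ) : ℂ) + Complex.sin ((-θ : ℝ) : ℂ) * I) := by
    rw [← Complex.ofReal_cos, ← Complex.ofReal_sin]
    apply Complex.ext
    · simp [zz_re, zz_im, Real.cos_two_mul, Real.sin_two_mul, -ofReal_sin, -ofReal_cos]
      ring
    · simp [zz_re, zz_im, Real.cos_two_mul, Real.sin_two_mul, -ofReal_sin, -ofReal_cos]
      ring
  unfold wF
  rw [Complex.add_im, Complex.ofReal_im, Complex.log_im, this, Complex.arg_mul_cos_add_sin_mul_I hc, zero_add]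
  obtain ⟨a, b⟩ := hθ
  have := Real.pi_pos
  constructor <;> linarith

noncomputable def hh (i : Fin 4) (θ : ℝ) : ℝ :=
  if i = 0 then -(1 / Real.pi) * (zz θ).im
  else if i = 1 then -(1 / Real.pi) * (zz θ).re
  else if i = 2 then -(1 / Real.pi) * (zz θ * wF (zz θ)).re
  else (2 / Real.pi ^ 2) * (zz θ * wF (zz θ)).im

lemma fPc_tan (i : Fin 4) {θ : ℝ} (hθ : θ ∈ Ioo (-(Real.pi / 2)) (Real.pi / 2)) :
    fPc i (Real.tan θ) = Real.cos θ ^ 2 * hh i θ := by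
  have hs : 0 < (1 + I * ((Real.tan θ : ℝ) : ℂ)).re := by simp [-ofReal_tan]
  have h0 := lap0 _ hs
  have h1 := lap1 _ hs
  rw [s_inv hθ, sq_z] at h0 h1
  have h1' := h1.2
  rw [← wF.eq_def, mul_assoc] at h1'
  fin_cases i
  · rw [fPc_half _ _ I (fun t => (t:ℂ)) h0.1 (by intro t ht; simp [psiC]), h0.2]
    simp [hh, -ofReal_cos, -ofReal_pow, pow_two]
    ring
  · rw [fPc_half _ _ (-1) (fun t => (t:ℂ)) h0.1 (by intro t ht; simp [psiC, abs_of_pos ht]), h0.2]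
    simp [hh, -ofReal_cos, -ofReal_pow, pow_two]
    ring
  · rw [fPc_half _ _ (-1) (fun t => ((t * Real.log t : ℝ) : ℂ)) h1.1
      (by intro t ht; simp [psiC, abs_of_pos ht]), h1']
    simp only [hh, neg_one_mul, Complex.neg_re, Complex.re_ofReal_mul]
    simp
    ring
  · rw [fPc_half _ _ (-I * (2 / Real.pi : ℝ)) (fun t => ((t * Real.log t : ℝ) : ℂ)) h1.1
      (by intro t ht; simp [psiC, abs_of_pos ht]; ring), h1']
    have : ∀ (a b : ℝ) (v : ℂ), (-I * (a:ℂ) * ((b:ℂ) * v)).re = a * b * v.im := by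
      intro a b v; simp; ring
    rw [this]
    simp only [hh]
    simp
    field_simp

lemma IC_eq (i j : Fin 4) :
    IC i j = Real.pi * ∫ θ in Ioo (-(Real.pi / 2)) (Real.pi / 2), hh i θ * hh j θ := by
  unfold IC
  congr 1
  rw [← setIntegral_univ, ← Real.image_tan_Ioo,
    integral_image_eq_integral_abs_deriv_smul (f' := fun θ => 1 / Real.cos θ ^ 2) measurableSet_Ioo
      (fun θ hθ => (Real.hasDerivAt_tan (Real.cos_pos_of_mem_Ioo hθ).ne').hasDerivWithinAt)
      Real.injOn_tan]
  refine setIntegral_congr_fun measurableSet_Ioo fun θ hθ => ?_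
  have hc := Real.cos_pos_of_mem_Ioo hθ
  have h := Real.sin_sq_add_cos_sq θ
  simp only [fPc_tan _ hθ]
  rw [abs_of_pos (by positivity), Real.tan_eq_sin_div_cos, smul_eq_mul]
  have e : 1 + (Real.sin θ / Real.cos θ) ^ 2 = 1 / Real.cos θ ^ 2 := by
    field_simp; linarith
  rw [e]
  field_simp

lemma fF2_zero (m : ℕ) : fF 2 m 0 = 0 := by simp [fF]
lemma fF0_zero (m : ℕ) :
    fF 0 m 0 = ((1 - Real.eulerMascheroniConstant - Real.log 2 : ℝ) : ℂ) ^ m := by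
  have : Complex.log (1 / 2) = ((-Real.log 2 : ℝ) : ℂ) := by
    rw [← Real.log_inv, Complex.ofReal_log (by norm_num)]
    norm_num
  simp only [fF, wF, pow_zero, one_mul, add_zero, this]
  push_cast; ring

lemma comb (H : ℝ → ℝ) (a b : ℝ) (p q : ℂ) (m m' : ℕ) (hm : m ≤ 2) (hm' : m' ≤ 2)
    (hH : ∀ θ ∈ Ioo (-(Real.pi / 2)) (Real.pi / 2),
      H θ = a + b * θ ^ 2 + (p * fF 0 m (zz θ) + q * fF 2 m' (zz θ)).re) :
    ∫ θ in Ioo (-(Real.pi / 2)) (Real.pi / 2), H θ = a * Real.pi + b * (Real.pi ^ 3 / 12)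
      + Real.pi * (1 - Real.eulerMascheroniConstant - Real.log 2) ^ m * p.re := by
  have hpi := Real.pi_pos
  obtain ⟨i1, e1⟩ := mean 0 m hm
  obtain ⟨i2, e2⟩ := mean 2 m' hm'
  have i3 := (i1.const_mul p).add (i2.const_mul q)
  have i4 : IntegrableOn (fun θ : ℝ => a + b * θ ^ 2) (Ioo (-(Real.pi / 2)) (Real.pi / 2)) :=
    (Continuous.integrableOn_Icc (by fun_prop)).mono_set Ioo_subset_Icc_self
  have e4 : ∫ θ in Ioo (-(Real.pi / 2)) (Real.pi / 2), (a + b * θ ^ 2) =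
      a * Real.pi + b * (Real.pi ^ 3 / 12) := by
    rw [← integral_Ioc_eq_integral_Ioo, ← intervalIntegral.integral_of_le (by linarith),
      intervalIntegral.integral_add (by simp) (Continuous.intervalIntegrable (by fun_prop) _ _),
      intervalIntegral.integral_const_mul, integral_pow, intervalIntegral.integral_const]
    simp only [smul_eq_mul]
    push_cast
    ring
  have e5 : ∫ θ in Ioo (-(Real.pi / 2)) (Real.pi / 2), (p * fF 0 m (zz θ) + q * fF 2 m' (zz θ)).re
      = Real.pi * (1 - Real.eulerMascheroniConstant - Real.log 2) ^ m * p.re := by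
    have := integral_re i3
    simp only [RCLike.re_to_complex, Pi.add_apply] at this
    refine this.trans ?_
    rw [integral_add (i1.const_mul p) (i2.const_mul q), integral_const_mul, integral_const_mul,
      e1, e2, fF2_zero, fF0_zero, ← Complex.ofReal_pow, ← Complex.ofReal_mul]
    simp only [mul_zero, add_zero, Complex.re_mul_ofReal]
    ring
  rw [setIntegral_congr_fun measurableSet_Ioo hH, ← e4, ← e5]
  exact integral_add i4 i3.re

end part3

theorem fisher_info_cauchy_exact :
    IC 0 0 = 1 / 2 ∧ IC 1 1 = 1 / 2 ∧
    IC 2 2 = (1 / 2) * (Real.pi ^ 2 / 6 +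
      (Real.eulerMascheroniConstant + Real.log 2 - 1) ^ 2) ∧
    IC 3 3 = (2 / Real.pi ^ 2) * (Real.pi ^ 2 / 6 +
      (Real.eulerMascheroniConstant + Real.log 2 - 1) ^ 2) ∧
    IC 1 2 = (1 / 2) * (1 - Real.eulerMascheroniConstant - Real.log 2) ∧
    IC 0 3 = (1 / Real.pi) * (Real.eulerMascheroniConstant + Real.log 2 - 1) ∧
    IC 0 1 = 0 ∧ IC 0 2 = 0 ∧ IC 2 3 = 0 ∧ IC 1 3 = 0 := by
  have hpi := Real.pi_pos
  have hn : ∀ θ, (zz θ).re ^ 2 + (zz θ).im ^ 2 = 1 := by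
    intro θ
    have := zz_norm θ
    rw [zz_re, zz_im]
    nlinarith [Real.sin_sq_add_cos_sq (2 * θ)]
  have h0 : ∀ θ, hh 0 θ = -(1 / Real.pi) * (zz θ).im := fun θ => by simp [hh]
  have h1 : ∀ θ, hh 1 θ = -(1 / Real.pi) * (zz θ).re := fun θ => by simp [hh]
  have h2 : ∀ θ, hh 2 θ = -(1 / Real.pi) * ((zz θ).re * (wF (zz θ)).re - (zz θ).im * (wF (zz θ)).im) :=
    fun θ => by simp [hh]
  have h3 : ∀ θ, hh 3 θ = (2 / Real.pi ^ 2) * ((zz θ).re * (wF (zz θ)).im + (zz θ).im * (wF (zz θ)).re) :=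
    fun θ => by simp [hh]
  set k := 1 / Real.pi with hk
  have hk2 : 2 / Real.pi ^ 2 = 2 * k ^ 2 := by rw [hk]; ring
  have hlp : ∀ (p q : ℝ) (W : ℂ), ((p + q * Complex.I) * W).re = p * W.re - q * W.im := by
    intro p q W; simp
  have key : ∀ (i j : Fin 4) (a b : ℝ) (p1 p2 q1 q2 : ℝ) (m m' : ℕ), m ≤ 2 → m' ≤ 2 →
    (∀ (x y u v θ : ℝ), x ^ 2 + y ^ 2 = 1 → v = -θ → ∀ z w : ℂ, z = ⟨x, y⟩ → w = ⟨u, v⟩ →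
      zz θ = z → wF (zz θ) = w → hh i θ * hh j θ = a + b * θ ^ 2 +
        (p1 * (w ^ m).re - p2 * (w ^ m).im) + (q1 * (z ^ 2 * w ^ m').re - q2 * (z ^ 2 * w ^ m').im)) →
    IC i j = Real.pi * (a * Real.pi + b * (Real.pi ^ 3 / 12)
      + Real.pi * (1 - Real.eulerMascheroniConstant - Real.log 2) ^ m * p1) := by
    intro i j a b p1 p2 q1 q2 m m' hm hm' H
    rw [IC_eq, comb _ a b (p1 + p2 * Complex.I) (q1 + q2 * Complex.I) m m' hm hm']
    · simp
    · intro θ hθ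
      rw [H (zz θ).re (zz θ).im (wF (zz θ)).re (wF (zz θ)).im θ (hn θ) (w_im hθ) (zz θ) (wF (zz θ)) rfl rfl rfl rfl]
      rw [Complex.add_re, hlp, hlp]
      simp only [fF, pow_zero, one_mul]
      ring
  refine ⟨?_, ?_, ?_, ?_, ?_, ?_, ?_, ?_, ?_, ?_⟩
  · rw [key 0 0 (k^2/2) 0 0 0 (-k^2/2) 0 0 0 (by norm_num) (by norm_num)]
    · rw [hk]; field_simp; ring
    · intro x y u v θ hxy hv z w hz hw e1 e2
      rw [h0, e1, hz]
      simp [pow_two]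
      linear_combination (k^2/2) * hxy
  · rw [key 1 1 (k^2/2) 0 0 0 (k^2/2) 0 0 0 (by norm_num) (by norm_num)]
    · rw [hk]; field_simp; ring
    · intro x y u v θ hxy hv z w hz hw e1 e2
      rw [h1, e1, hz]
      simp [pow_two]
      linear_combination (k^2/2) * hxy
  · rw [key 2 2 0 (k^2) (k^2/2) 0 (k^2/2) 0 2 2 (by norm_num) (by norm_num)]
    · rw [hk]; field_simp; ring
    · intro x y u v θ hxy hv z w hz hw e1 e2
      rw [h2, e2, e1, hz, hw]
      obtain rfl : θ = -v := by linarith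
      simp [pow_two]
      linear_combination (k^2/2) * (u^2+v^2) * hxy
  · rw [key 3 3 0 (4*k^4) (2*k^4) 0 (-2*k^4) 0 2 2 (by norm_num) (by norm_num)]
    · rw [hk]; field_simp; ring
    · intro x y u v θ hxy hv z w hz hw e1 e2
      rw [h3, e2, e1, hz, hw, hk2]
      obtain rfl : θ = -v := by linarith
      simp [pow_two]
      linear_combination (2*k^4) * (u^2+v^2) * hxy
  · rw [key 1 2 0 0 (k^2/2) 0 (k^2/2) 0 1 1 (by norm_num) (by norm_num)]
    · rw [hk]; field_simp; ring
    · intro x y u v θ hxy hv z w hz hw e1 e2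
      rw [h1, h2, e2, e1, hz, hw]
      simp [pow_two]
      linear_combination (k^2/2) * u * hxy
  · rw [key 0 3 0 0 (-k^3) 0 (k^3) 0 1 1 (by norm_num) (by norm_num)]
    · rw [hk]; field_simp; ring
    · intro x y u v θ hxy hv z w hz hw e1 e2
      rw [h0, h3, e2, e1, hz, hw, hk2]
      simp [pow_two]
      linear_combination (-k^3) * u * hxy
  · rw [key 0 1 0 0 0 0 0 (-k^2/2) 0 0 (by norm_num) (by norm_num)]
    · simp
    · intro x y u v θ hxy hv z w hz hw e1 e2
      rw [h0, h1, e1, hz]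
      simp [pow_two]
      ring
  · rw [key 0 2 0 0 0 (k^2/2) 0 (-k^2/2) 1 1 (by norm_num) (by norm_num)]
    · simp
    · intro x y u v θ hxy hv z w hz hw e1 e2
      rw [h0, h2, e2, e1, hz, hw]
      simp [pow_two]
      linear_combination (-k^2/2) * v * hxy
  · rw [key 2 3 0 0 0 0 0 (k^3) 0 2 (by norm_num) (by norm_num)]
    · simp
    · intro x y u v θ hxy hv z w hz hw e1 e2
      rw [h2, h3, e2, e1, hz, hw, hk2]
      simp [pow_two]
      ring
  · rw [key 1 3 0 0 0 (k^3) 0 (k^3) 1 1 (by norm_num) (by norm_num)]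
    · simp
    · intro x y u v θ hxy hv z w hz hw e1 e2
      rw [h1, h3, e2, e1, hz, hw, hk2]
      simp [pow_two]
      linear_combination (-k^3) * v * hxy
end
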